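/- Fix T > 0, p > 0, constants α, β, γ, δ ≥ 0, and v₀ ∈ C^∞([0,1]) with 0 ≤ v₀ ≤ 1. Set v₋ = (p+α+γ−√((p−α+γ)²+4αγ))/(2p) and v₊ = (p−β−δ+√((p−β+δ)²+4βδ))/(2p). For each ε > 0 let u^ε ∈ C^∞([0,T]×[0,1]) with 0 ≤ u^ε ≤ 1 satisfy ∂_t u^ε = ε ∂_x² u^ε − p ∂_x[J(u^ε)] on (0,T)×(0,1), u^ε(0,·) = v₀, and the Robin boundary conditions [ε∂_x u^ε − pJ(u^ε) + α − (α+γ)u^ε]|_{x=0} = 0 and [ε∂_x u^ε − pJ(u^ε) − δ + (β+δ)u^ε]|_{x=1} = 0 for all t ∈ [0,T]. Then as ε → 0, u^ε converges in the weak-⋆ topology of L^∞([0,T]×[0,1]) to a function u satisfying: (i) ∫∫ [F(u)∂_t ψ + pQ(u)∂_x ψ] dx dt ≥ 0 for every Lax entropy flux pair (F,Q) and every nonnegative ψ ∈ C_c^∞((0,T)×(0,1)); (ii) esslim_{t→0+} ∫₀¹ |u(t,x) − v₀(x)| dx = 0; (iii) for every boundary entropy flux pair (ℱ,𝒬) and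 every nonnegative φ ∈ C([0,T]), esslim_{x→0+} ∫₀ᵀ φ(t) 𝒬(u(t,x), v₋) dt ≤ 0 and esslim_{x→1−} ∫₀ᵀ φ(t) 𝒬(u(t,x), v₊) dt ≥ 0. (Theorem 2.8, Robin boundary case.) -/

import Mathlib

open Set MeasureTheory intervalIntegral Filter

/-- The flux `J u = u (1 - u)`. -/
noncomputable def J (u : ℝ) : ℝ := u * (1 - u)

/-- A Lax entropy flux pair for the flux `J u = u * (1 - u)`. -/
def IsLaxPair (F Q : ℝ → ℝ) : Prop :=
  ContDiff ℝ 2 F ∧ ContDiff ℝ 2 Q ∧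
  (∀ u ∈ Set.Icc (0:ℝ) 1, deriv Q u = (1 - 2*u) * deriv F u) ∧
  (∀ u ∈ Set.Icc (0:ℝ) 1, 0 ≤ deriv (deriv F) u)

/-- A boundary entropy flux pair. -/
def IsBoundaryPair (F Q : ℝ → ℝ → ℝ) : Prop :=
  ∀ v ∈ Set.Icc (0:ℝ) 1,
    IsLaxPair (fun u => F u v) (fun u => Q u v) ∧
    F v v = 0 ∧ deriv (fun u => F u v) v = 0 ∧ Q v v = 0

/-- The space-time rectangle `[0, T] × [0, 1]`. -/
def rect (T : ℝ) : Set (ℝ × ℝ) := Icc (0:ℝ) T ×ˢ Icc (0:ℝ) 1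

lemma mem_rect {T t x : ℝ} : (t, x) ∈ rect T ↔ t ∈ Icc (0:ℝ) T ∧ x ∈ Icc (0:ℝ) 1 := Iff.rfl

lemma isCompact_rect (T : ℝ) : IsCompact (rect T) := isCompact_Icc.prod isCompact_Icc

lemma convex_rect (T : ℝ) : Convex ℝ (rect T) := (convex_Icc _ _).prod (convex_Icc _ _)

lemma measurableSet_rect (T : ℝ) : MeasurableSet (rect T) :=
  measurableSet_Icc.prod measurableSet_Icc

lemma volume_rect_lt_top (T : ℝ) : volume (rect T) < ⊤ := (isCompact_rect T).measure_lt_top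

instance (T : ℝ) : IsFiniteMeasure (volume.restrict (rect T)) :=
  ⟨by simpa using volume_rect_lt_top T⟩

lemma closure_interior_rect {T : ℝ} (hT : 0 < T) :
    closure (Ioo (0:ℝ) T ×ˢ Ioo (0:ℝ) 1) = rect T := by
  rw [closure_prod_eq, closure_Ioo hT.ne, closure_Ioo one_ne_zero.symm]; rfl

/-- The time derivative of a function on space-time. -/
noncomputable def Dt (f : ℝ × ℝ → ℝ) (z : ℝ × ℝ) : ℝ := fderiv ℝ f z (1, 0)

/-- The space derivative of a function on space-time. -/
noncomputable def Dx (f : ℝ × ℝ → ℝ) (z : ℝ × ℝ) : ℝ := fderiv ℝ f z (0, 1)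

lemma fderiv_eq_Dt_Dx (f : ℝ × ℝ → ℝ) (z a : ℝ × ℝ) :
    fderiv ℝ f z a = a.1 * Dt f z + a.2 * Dx f z := by
  have : a = a.1 • ((1, 0) : ℝ × ℝ) + a.2 • ((0, 1) : ℝ × ℝ) := by ext <;> simp
  conv_lhs => rw [this]
  simp only [map_add, map_smul, smul_eq_mul, Dt, Dx]

lemma contDiff_Dt {f : ℝ × ℝ → ℝ} (hf : ContDiff ℝ (⊤ : ℕ∞) f) :
    ContDiff ℝ (⊤ : ℕ∞) (Dt f) :=
  (hf.fderiv_right (by simp)).clm_apply contDiff_const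

lemma contDiff_Dx {f : ℝ × ℝ → ℝ} (hf : ContDiff ℝ (⊤ : ℕ∞) f) :
    ContDiff ℝ (⊤ : ℕ∞) (Dx f) :=
  (hf.fderiv_right (by simp)).clm_apply contDiff_const

lemma hasDerivAt_prodMk_left (t x : ℝ) : HasDerivAt (fun s : ℝ => (s, x)) ((1:ℝ), (0:ℝ)) t :=
  (hasDerivAt_id t).prodMk (hasDerivAt_const t x)

lemma hasDerivAt_prodMk_right (t x : ℝ) : HasDerivAt (fun y : ℝ => (t, y)) ((0:ℝ), (1:ℝ)) x :=
  (hasDerivAt_const x t).prodMk (hasDerivAt_id x)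

lemma hasDerivAt_Dt {f : ℝ × ℝ → ℝ} {t x : ℝ} (hf : DifferentiableAt ℝ f (t, x)) :
    HasDerivAt (fun s => f (s, x)) (Dt f (t, x)) t :=
  hf.hasFDerivAt.comp_hasDerivAt t (hasDerivAt_prodMk_left t x)

lemma hasDerivAt_Dx {f : ℝ × ℝ → ℝ} {t x : ℝ} (hf : DifferentiableAt ℝ f (t, x)) :
    HasDerivAt (fun y => f (t, y)) (Dx f (t, x)) x :=
  hf.hasFDerivAt.comp_hasDerivAt x (hasDerivAt_prodMk_right t x)

lemma Dt_Dx_comm {f : ℝ × ℝ → ℝ} (hf : ContDiff ℝ (⊤ : ℕ∞) f) (z : ℝ × ℝ) :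
    Dt (Dx f) z = Dx (Dt f) z := by
  have hs : IsSymmSndFDerivAt ℝ f z :=
    hf.contDiffAt.isSymmSndFDerivAt (by simpa using WithTop.coe_le_coe.2 (le_top (a := (2 : ℕ∞))))
  have hd : DifferentiableAt ℝ (fderiv ℝ f) z :=
    ((hf.fderiv_right (m := (⊤ : ℕ∞)) (by simp)).differentiable (by simp)) z
  have h1 : ∀ a b : ℝ × ℝ, fderiv ℝ (fun y => fderiv ℝ f y a) z b
      = fderiv ℝ (fderiv ℝ f) z b a := by
    intro a b
    rw [fderiv_clm_apply hd (differentiableAt_const a)]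
    simp
  change fderiv ℝ (fun y => fderiv ℝ f y (0, 1)) z (1, 0)
    = fderiv ℝ (fun y => fderiv ℝ f y (1, 0)) z (0, 1)
  rw [h1, h1]
  exact hs.eq _ _

lemma eqOn_rect_of_eqOn_interior {T : ℝ} (hT : 0 < T) {f g : ℝ × ℝ → ℝ} (hf : Continuous f)
    (hg : Continuous g) (h : ∀ z ∈ Ioo (0:ℝ) T ×ˢ Ioo (0:ℝ) 1, f z = g z) :
    ∀ z ∈ rect T, f z = g z := by
  rw [← closure_interior_rect hT]
  exact fun z hz => closure_minimal h (isClosed_eq hf hg) hz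

/-! ### One-variable maximum principles -/

lemma nonneg_of_hasDerivWithinAt_of_max {g : ℝ → ℝ} {a b t g' : ℝ}
    (hg : HasDerivWithinAt g g' (Icc a b) t) (hat : a < t) (htb : t ≤ b)
    (hmax : ∀ s ∈ Icc a b, g s ≤ g t) : 0 ≤ g' := by
  have h : HasDerivWithinAt g g' (Ioo a t) t :=
    hg.mono fun s hs => ⟨hs.1.le, hs.2.le.trans htb⟩
  rw [hasDerivWithinAt_iff_tendsto_slope' (by simp)] at h
  have : (nhdsWithin t (Ioo a t)).NeBot := by
    rw [nhdsWithin_Ioo_eq_nhdsLT hat]; infer_instance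
  refine ge_of_tendsto h ?_
  filter_upwards [self_mem_nhdsWithin] with s hs
  rw [slope_def_field]
  exact div_nonneg_of_nonpos (sub_nonpos.2 (hmax s ⟨hs.1.le, hs.2.le.trans htb⟩))
    (sub_nonpos.2 hs.2.le)

lemma nonpos_of_hasDerivWithinAt_of_max {g : ℝ → ℝ} {a b t g' : ℝ}
    (hg : HasDerivWithinAt g g' (Icc a b) t) (hat : a ≤ t) (htb : t < b)
    (hmax : ∀ s ∈ Icc a b, g s ≤ g t) : g' ≤ 0 := by
  have h : HasDerivWithinAt g g' (Ioo t b) t :=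
    hg.mono fun s hs => ⟨hat.trans hs.1.le, hs.2.le⟩
  rw [hasDerivWithinAt_iff_tendsto_slope' (by simp)] at h
  have : (nhdsWithin t (Ioo t b)).NeBot := by
    rw [nhdsWithin_Ioo_eq_nhdsGT htb]; infer_instance
  refine le_of_tendsto h ?_
  filter_upwards [self_mem_nhdsWithin] with s hs
  rw [slope_def_field]
  exact div_nonpos_of_nonpos_of_nonneg (sub_nonpos.2 (hmax s ⟨hat.trans hs.1.le, hs.2.le⟩))
    (sub_nonneg.2 hs.1.le)

lemma IsLocalMax.deriv_deriv_nonpos {g : ℝ → ℝ} {x : ℝ} (h : IsLocalMax g x)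
    (hc : ContinuousAt g x) : deriv (deriv g) x ≤ 0 := by
  by_contra! hpos
  have hmin := isLocalMin_of_deriv_deriv_pos hpos h.deriv_eq_zero hc
  have heq : g =ᶠ[nhds x] fun _ => g x := by
    filter_upwards [h, hmin] with y h1 h2 using le_antisymm h1 h2
  have h2 : deriv (deriv g) x = 0 := by
    rw [heq.deriv.deriv_eq]; simp
  linarith

/-- If `g` has derivative `g₁` near an interior maximum point and `g₁` has derivative `g₂`
there, then `g₁ = 0` and `g₂ ≤ 0`. -/
lemma interior_max_conditions {g g₁ : ℝ → ℝ} {x g₂ : ℝ}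
    (hmax : IsLocalMax g x) (hg : ∀ᶠ y in nhds x, HasDerivAt g (g₁ y) y)
    (hg₁ : HasDerivAt g₁ g₂ x) : g₁ x = 0 ∧ g₂ ≤ 0 := by
  have h1 := hg.self_of_nhds
  refine ⟨hmax.hasDerivAt_eq_zero h1, ?_⟩
  have h2 : deriv g =ᶠ[nhds x] g₁ := hg.mono fun y hy => hy.deriv
  have := hmax.deriv_deriv_nonpos h1.continuousAt
  rwa [h2.deriv_eq, hg₁.deriv] at this

/-! ### Weak maximum principle on the rectangle -/

lemma le_on_rect_of_parabolic {T M : ℝ} {m : ℝ × ℝ → ℝ} (hm : ContDiff ℝ (⊤ : ℕ∞) m)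
    (hinteg : ∀ t ∈ Ioc (0:ℝ) T, ∀ x ∈ Ioo (0:ℝ) 1, Dx m (t, x) = 0 → Dx (Dx m) (t, x) ≤ 0 →
      Dt m (t, x) ≤ 0)
    (hleft : ∀ t ∈ Icc (0:ℝ) T, m (t, 0) ≤ M) (hright : ∀ t ∈ Icc (0:ℝ) T, m (t, 1) ≤ M)
    (hinit : ∀ x ∈ Ioo (0:ℝ) 1, m (0, x) ≤ M) :
    ∀ z ∈ rect T, m z ≤ M := by
  have hdm : Differentiable ℝ m := hm.differentiable (by simp)
  have hdx : Differentiable ℝ (Dx m) := (contDiff_Dx hm).differentiable (by simp)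
  rintro ⟨t', x'⟩ hz
  have hT0 : 0 ≤ T := hz.1.1.trans hz.1.2
  refine le_of_forall_pos_le_add fun κ hκ => ?_
  obtain ⟨c, hc, hcT⟩ : ∃ c > 0, c * T ≤ κ :=
    ⟨κ / (T + 1), by positivity, by rw [div_mul_eq_mul_div, div_le_iff₀ (by positivity)]; nlinarith⟩
  obtain ⟨⟨t, x⟩, hzm, hmax⟩ := (isCompact_rect T).exists_isMaxOn ⟨_, hz⟩
    (f := fun z => m z - c * z.1) (hm.continuous.sub (by fun_prop)).continuousOn
  have key : m (t, x) ≤ M := by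
    obtain ⟨htT, hx⟩ := mem_rect.1 hzm
    rcases hx.1.eq_or_lt with rfl | h
    · exact hleft t htT
    rcases hx.2.eq_or_lt with rfl | h'
    · exact hright t htT
    rcases htT.1.eq_or_lt with rfl | htpos
    · exact hinit x ⟨h, h'⟩
    exfalso
    have hloc : IsLocalMax (fun y => m (t, y)) x := by
      filter_upwards [Ioo_mem_nhds h h'] with y hy
      have := hmax (mem_rect.2 ⟨hzm.1, Ioo_subset_Icc_self hy⟩)
      simp only [mem_ofPred_eq] at this
      linarith
    obtain ⟨h1, h2⟩ := interior_max_conditions hloc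
      (Eventually.of_forall fun y => hasDerivAt_Dx (hdm (t, y))) (hasDerivAt_Dx (hdx (t, x)))
    have h3 := hinteg t ⟨htpos, hzm.1.2⟩ x ⟨h, h'⟩ h1 h2
    have h4 : HasDerivAt (fun s => m (s, x) - c * s) (Dt m (t, x) - c * 1) t :=
      (hasDerivAt_Dt (hdm (t, x))).sub ((hasDerivAt_id t).const_mul c)
    have h5 := nonneg_of_hasDerivWithinAt_of_max (h4.hasDerivWithinAt (s := Icc 0 T)) htpos hzm.1.2
      (fun s hs => hmax (mem_rect.2 ⟨hs, hzm.2⟩))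
    linarith
  have h1 := hmax hz
  simp only [mem_ofPred_eq] at h1
  have h2 : c * t' ≤ c * T := mul_le_mul_of_nonneg_left hz.1.2 hc.le
  have h3 : 0 ≤ c * t := mul_nonneg hc.le hzm.1.1
  linarith

/-! ### Viscous solutions with Robin boundary conditions -/

/-- `v` is a smooth solution with values in `[0, 1]` of the viscous conservation law on the
closed rectangle with initial datum `v0` and Robin boundary conditions. -/
structure IsRobinSol (T p α β γ δ ε : ℝ) (v0 : ℝ → ℝ) (v : ℝ × ℝ → ℝ) : Prop where
  smooth : ContDiff ℝ (⊤ : ℕ∞) v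
  mem : ∀ z ∈ rect T, v z ∈ Icc (0:ℝ) 1
  pde : ∀ z ∈ rect T, Dt v z = ε * Dx (Dx v) z - p * ((1 - 2 * v z) * Dx v z)
  init : ∀ x ∈ Icc (0:ℝ) 1, v (0, x) = v0 x
  left : ∀ t ∈ Icc (0:ℝ) T,
    ε * Dx v (t, 0) = p * J (v (t, 0)) - α + (α + γ) * v (t, 0)
  right : ∀ t ∈ Icc (0:ℝ) T,
    ε * Dx v (t, 1) = p * J (v (t, 1)) + δ - (β + δ) * v (t, 1)

/-- The (negative of the) viscous flux `ε ∂ₓ v - p J(v)`. -/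
noncomputable def flux (ε p : ℝ) (v : ℝ × ℝ → ℝ) (z : ℝ × ℝ) : ℝ := ε * Dx v z - p * J (v z)

lemma J_mem_Icc {a : ℝ} (ha : a ∈ Icc (0:ℝ) 1) : J a ∈ Icc (0:ℝ) 1 := by
  unfold J; constructor <;> nlinarith [ha.1, ha.2]

lemma hasDerivAt_J (a : ℝ) : HasDerivAt J (1 - 2 * a) a := by
  have := (hasDerivAt_id a).mul ((hasDerivAt_id a).const_sub 1)
  refine this.congr_deriv ?_
  simp only [id]; ring

lemma contDiff_flux {ε p : ℝ} {v : ℝ × ℝ → ℝ} (hv : ContDiff ℝ (⊤ : ℕ∞) v) :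
    ContDiff ℝ (⊤ : ℕ∞) (flux ε p v) := by
  have h := contDiff_Dx hv
  unfold flux J
  fun_prop

lemma fderiv_flux {ε p : ℝ} {v : ℝ × ℝ → ℝ} (hv : ContDiff ℝ (⊤ : ℕ∞) v) (z a : ℝ × ℝ) :
    fderiv ℝ (flux ε p v) z a =
      ε * fderiv ℝ (Dx v) z a - p * ((1 - 2 * v z) * fderiv ℝ v z a) := by
  have h1 : HasFDerivAt (Dx v) (fderiv ℝ (Dx v) z) z :=
    ((contDiff_Dx hv).differentiable (by simp) z).hasFDerivAt
  have h2 : HasFDerivAt v (fderiv ℝ v z) z := (hv.differentiable (by simp) z).hasFDerivAt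
  have h3 := (h1.const_mul ε).sub (((hasDerivAt_J (v z)).comp_hasFDerivAt z h2).const_mul p)
  have h4 : fderiv ℝ (flux ε p v) z = _ := h3.fderiv
  rw [h4]
  simp

namespace IsRobinSol

variable {T p α β γ δ ε : ℝ} {v0 : ℝ → ℝ} {v : ℝ × ℝ → ℝ}

lemma Dx_flux (S : IsRobinSol T p α β γ δ ε v0 v) {z : ℝ × ℝ} (hz : z ∈ rect T) :
    Dx (flux ε p v) z = Dt v z := by
  rw [S.pde z hz]; exact fderiv_flux S.smooth z _

lemma flux_left (S : IsRobinSol T p α β γ δ ε v0 v) {t : ℝ} (ht : t ∈ Icc (0:ℝ) T) :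
    flux ε p v (t, 0) = (α + γ) * v (t, 0) - α := by
  rw [flux, S.left t ht]; ring

lemma flux_right (S : IsRobinSol T p α β γ δ ε v0 v) {t : ℝ} (ht : t ∈ Icc (0:ℝ) T) :
    flux ε p v (t, 1) = δ - (β + δ) * v (t, 1) := by
  rw [flux, S.right t ht]; ring

lemma Dt_flux (hT : 0 < T) (S : IsRobinSol T p α β γ δ ε v0 v) {z : ℝ × ℝ} (hz : z ∈ rect T) :
    Dt (flux ε p v) z =
      ε * Dx (Dx (flux ε p v)) z - p * ((1 - 2 * v z) * Dx (flux ε p v) z) := by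
  have hm := contDiff_flux (ε := ε) (p := p) S.smooth
  refine eqOn_rect_of_eqOn_interior hT (g := fun z => ε * Dx (Dx (flux ε p v)) z
    - p * ((1 - 2 * v z) * Dx (flux ε p v) z)) (contDiff_Dt hm).continuous ?_ ?_ z hz
  · have h1 := (contDiff_Dx (contDiff_Dx hm)).continuous
    have h2 := (contDiff_Dx hm).continuous
    have h3 := S.smooth.continuous
    fun_prop
  · intro z hz
    have hzr : z ∈ rect T := ⟨Ioo_subset_Icc_self hz.1, Ioo_subset_Icc_self hz.2⟩
    have heq : Dt v =ᶠ[nhds z] Dx (flux ε p v) := by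
      filter_upwards [(isOpen_Ioo.prod isOpen_Ioo).mem_nhds hz] with y hy
      exact (S.Dx_flux ⟨Ioo_subset_Icc_self hy.1, Ioo_subset_Icc_self hy.2⟩).symm
    have h1 : Dx (Dt v) z = Dx (Dx (flux ε p v)) z := by
      change fderiv ℝ (Dt v) z (0, 1) = fderiv ℝ (Dx (flux ε p v)) z (0, 1)
      rw [heq.fderiv_eq]
    have h2 : Dt (flux ε p v) z = ε * Dt (Dx v) z - p * ((1 - 2 * v z) * Dt v z) :=
      fderiv_flux S.smooth z _
    rw [h2, Dt_Dx_comm S.smooth, h1, S.Dx_flux hzr]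

lemma Dx_init (S : IsRobinSol T p α β γ δ ε v0 v) {x : ℝ}
    (hx : x ∈ Ioo (0:ℝ) 1) : Dx v (0, x) = deriv v0 x := by
  have h1 := hasDerivAt_Dx (S.smooth.differentiable (by simp) (0, x))
  have h2 : (fun y => v (0, y)) =ᶠ[nhds x] v0 := by
    filter_upwards [Ioo_mem_nhds hx.1 hx.2] with y hy using S.init y (Ioo_subset_Icc_self hy)
  rw [← h1.deriv, h2.deriv_eq]

lemma abs_flux_le (hT : 0 < T) (hp : 0 < p) (hα : 0 ≤ α) (hβ : 0 ≤ β) (hγ : 0 ≤ γ) (hδ : 0 ≤ δ)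
    (hε : 0 < ε) (hε1 : ε ≤ 1) {C : ℝ} (hC : ∀ x ∈ Icc (0:ℝ) 1, |deriv v0 x| ≤ C)
    (S : IsRobinSol T p α β γ δ ε v0 v) :
    ∀ z ∈ rect T, |flux ε p v z| ≤ α + β + γ + δ + C + p := by
  have hm := contDiff_flux (ε := ε) (p := p) S.smooth
  have hC0 : 0 ≤ C := (abs_nonneg _).trans (hC 0 (by simp))
  have hleft : ∀ t ∈ Icc (0:ℝ) T, |flux ε p v (t, 0)| ≤ α + β + γ + δ + C + p := by
    intro t ht
    have h := S.mem (t, 0) (mem_rect.2 ⟨ht, by simp⟩)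
    rw [S.flux_left ht, abs_le]
    constructor <;> nlinarith [h.1, h.2]
  have hright : ∀ t ∈ Icc (0:ℝ) T, |flux ε p v (t, 1)| ≤ α + β + γ + δ + C + p := by
    intro t ht
    have h := S.mem (t, 1) (mem_rect.2 ⟨ht, by simp⟩)
    rw [S.flux_right ht, abs_le]
    constructor <;> nlinarith [h.1, h.2]
  have hinit : ∀ x ∈ Ioo (0:ℝ) 1, |flux ε p v (0, x)| ≤ α + β + γ + δ + C + p := by
    intro x hx
    have h := J_mem_Icc (S.mem (0, x) (mem_rect.2 ⟨⟨le_rfl, hT.le⟩, Ioo_subset_Icc_self hx⟩))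
    have h' := abs_le.1 (hC x (Ioo_subset_Icc_self hx))
    rw [flux, S.Dx_init hx, abs_le]
    constructor <;> nlinarith [h.1, h.2, h'.1, h'.2]
  intro z hz
  rw [abs_le']
  constructor
  · refine le_on_rect_of_parabolic hm ?_ (fun t ht => (abs_le.1 (hleft t ht)).2)
      (fun t ht => (abs_le.1 (hright t ht)).2) (fun x hx => (abs_le.1 (hinit x hx)).2) z hz
    intro t ht x hx h1 h2
    rw [S.Dt_flux hT (mem_rect.2 ⟨Ioc_subset_Icc_self ht, Ioo_subset_Icc_self hx⟩), h1]
    nlinarith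
  · have hneg : ∀ f : ℝ × ℝ → ℝ, Dx (fun z => - f z) = fun z => - Dx f z := by
      intro f; funext z; simp [Dx]
    refine le_on_rect_of_parabolic (m := fun z => - flux ε p v z) hm.neg ?_
      (fun t ht => by linarith [(abs_le.1 (hleft t ht)).1])
      (fun t ht => by linarith [(abs_le.1 (hright t ht)).1])
      (fun x hx => by linarith [(abs_le.1 (hinit x hx)).1]) z hz
    intro t ht x hx h1 h2
    rw [hneg, hneg] at h2
    rw [hneg] at h1
    have h3 := S.Dt_flux hT (mem_rect.2 ⟨Ioc_subset_Icc_self ht, Ioo_subset_Icc_self hx⟩)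
    have h4 : Dt (fun z => - flux ε p v z) (t, x) = - Dt (flux ε p v) (t, x) := by simp [Dt]
    rw [neg_eq_zero] at h1
    rw [h4, h3, h1]
    nlinarith

end IsRobinSol

/-! ### Potentials -/

/-- `U` is a primitive on the rectangle of the form `m dt + v dx`. -/
def IsPotential (T : ℝ) (m v U : ℝ × ℝ → ℝ) : Prop :=
  ∀ z ∈ rect T, HasFDerivWithinAt U
    (m z • ContinuousLinearMap.fst ℝ ℝ ℝ + v z • ContinuousLinearMap.snd ℝ ℝ ℝ) (rect T) z

lemma IsRobinSol.exists_potential {T p α β γ δ ε : ℝ} {v0 : ℝ → ℝ} {v : ℝ × ℝ → ℝ}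
    (S : IsRobinSol T p α β γ δ ε v0 v) :
    ∃ U, IsPotential T (flux ε p v) v U ∧ U (0, 0) = 0 := by
  have hm := contDiff_flux (ε := ε) (p := p) S.smooth
  obtain ⟨U, hU⟩ := (convex_rect T).exists_forall_hasFDerivWithinAt_of_hasFDerivWithinAt_symmetric
    (ω := fun z => flux ε p v z • ContinuousLinearMap.fst ℝ ℝ ℝ
      + v z • ContinuousLinearMap.snd ℝ ℝ ℝ)
    (dω := fun z => (fderiv ℝ (flux ε p v) z).smulRight (ContinuousLinearMap.fst ℝ ℝ ℝ)
      + (fderiv ℝ v z).smulRight (ContinuousLinearMap.snd ℝ ℝ ℝ))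
    (fun z _ => ((((hm.differentiable (by simp) z).hasFDerivAt).smul_const _).add
      (((S.smooth.differentiable (by simp) z).hasFDerivAt).smul_const _)).hasFDerivWithinAt)
    (by
      intro z hz a _ b _
      have h := S.Dx_flux hz
      simp only [add_apply, ContinuousLinearMap.smulRight_apply,
        smul_apply, ContinuousLinearMap.coe_fst', ContinuousLinearMap.coe_snd',
        smul_eq_mul, fderiv_eq_Dt_Dx, h]
      ring)
  refine ⟨fun z => U z - U (0, 0), fun z hz => (hU z hz).sub_const _, by simp⟩

namespace IsPotential

variable {T : ℝ} {m v U : ℝ × ℝ → ℝ}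

lemma hasDerivWithinAt_left (hU : IsPotential T m v U) {t x : ℝ} (hz : (t, x) ∈ rect T) :
    HasDerivWithinAt (fun s => U (s, x)) (m (t, x)) (Icc 0 T) t := by
  have h : HasDerivWithinAt (fun s => U (s, x)) _ (Icc 0 T) t :=
    (hU _ hz).comp_hasDerivWithinAt t (hasDerivAt_prodMk_left t x).hasDerivWithinAt
      (fun s hs => mem_rect.2 ⟨hs, hz.2⟩)
  refine h.congr_deriv ?_
  simp

lemma hasDerivWithinAt_right (hU : IsPotential T m v U) {t x : ℝ} (hz : (t, x) ∈ rect T) :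
    HasDerivWithinAt (fun y => U (t, y)) (v (t, x)) (Icc 0 1) x := by
  have h : HasDerivWithinAt (fun y => U (t, y)) _ (Icc 0 1) x :=
    (hU _ hz).comp_hasDerivWithinAt x (hasDerivAt_prodMk_right t x).hasDerivWithinAt
      (fun s hs => mem_rect.2 ⟨hz.1, hs⟩)
  refine h.congr_deriv ?_
  simp

lemma continuousOn (hU : IsPotential T m v U) : ContinuousOn U (rect T) :=
  fun z hz => (hU z hz).continuousWithinAt

lemma hasFDerivAt (hU : IsPotential T m v U) {z : ℝ × ℝ}
    (hz : z ∈ Ioo (0:ℝ) T ×ˢ Ioo (0:ℝ) 1) :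
    HasFDerivAt U (m z • ContinuousLinearMap.fst ℝ ℝ ℝ + v z • ContinuousLinearMap.snd ℝ ℝ ℝ) z :=
  (hU z ⟨Ioo_subset_Icc_self hz.1, Ioo_subset_Icc_self hz.2⟩).hasFDerivAt
    (mem_of_superset ((isOpen_Ioo.prod isOpen_Ioo).mem_nhds hz)
      (prod_mono Ioo_subset_Icc_self Ioo_subset_Icc_self))

/-- A potential of bounded fields is Lipschitz. -/
lemma abs_sub_le (hU : IsPotential T m v U) {C : ℝ} (hm : ∀ z ∈ rect T, |m z| ≤ C)
    (hv : ∀ z ∈ rect T, v z ∈ Icc (0:ℝ) 1) {z z' : ℝ × ℝ} (hz : z ∈ rect T) (hz' : z' ∈ rect T) :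
    |U z' - U z| ≤ (C + 1) * ‖z' - z‖ := by
  refine (convex_rect T).norm_image_sub_le_of_norm_hasFDerivWithin_le hU ?_ hz hz'
  intro y hy
  have hC := (abs_nonneg _).trans (hm y hy)
  refine ContinuousLinearMap.opNorm_le_bound _ (by linarith) fun a => ?_
  have h1 : |a.1| ≤ ‖a‖ := norm_fst_le a
  have h2 : |a.2| ≤ ‖a‖ := norm_snd_le a
  have h3 : |v y| ≤ 1 := abs_le.2 ⟨by linarith [(hv y hy).1], (hv y hy).2⟩
  simp only [add_apply, smul_apply, ContinuousLinearMap.coe_fst',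
    ContinuousLinearMap.coe_snd', smul_eq_mul, Real.norm_eq_abs]
  calc |m y * a.1 + v y * a.2| ≤ |m y| * |a.1| + |v y| * |a.2| := by
        rw [← abs_mul, ← abs_mul]; exact abs_add_le _ _
    _ ≤ C * ‖a‖ + 1 * ‖a‖ := by gcongr; exact hm y hy
    _ = (C + 1) * ‖a‖ := by ring

end IsPotential

/-! ### The boundary densities -/

/-- The sign properties of the Robin boundary fluxes around the boundary densities. -/
structure IsBoundaryDensity (p α β γ δ vm vp : ℝ) : Prop where
  vm_mem : vm ∈ Icc (0:ℝ) 1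
  vp_mem : vp ∈ Icc (0:ℝ) 1
  left_nonpos : ∀ a ≤ vm, p * J a - α + (α + γ) * a ≤ 0
  left_nonneg : ∀ a ∈ Icc vm 1, 0 ≤ p * J a - α + (α + γ) * a
  right_nonpos : ∀ a, vp ≤ a → p * J a + δ - (β + δ) * a ≤ 0
  right_nonneg : ∀ a ∈ Icc 0 vp, 0 ≤ p * J a + δ - (β + δ) * a

lemma left_root_signs {p α γ v : ℝ} (hp : 0 < p) (hα : 0 ≤ α) (hγ : 0 ≤ γ)
    (hv : v = (p + α + γ - √((p - α + γ)^2 + 4*α*γ)) / (2*p)) :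
    v ∈ Icc (0:ℝ) 1 ∧ (∀ a ≤ v, p * J a - α + (α + γ) * a ≤ 0) ∧
      (∀ a ∈ Icc v 1, 0 ≤ p * J a - α + (α + γ) * a) := by
  set r := √((p - α + γ)^2 + 4*α*γ) with hr
  have hr0 : 0 ≤ r := Real.sqrt_nonneg _
  have hr2 : r ^ 2 = (p - α + γ)^2 + 4*α*γ := Real.sq_sqrt (by positivity)
  obtain ⟨v', hv'⟩ : ∃ v', v' = (p + α + γ + r) / (2 * p) := ⟨_, rfl⟩
  have e1 : 2 * p * v = p + α + γ - r := by rw [hv]; field_simp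
  have e2 : 2 * p * v' = p + α + γ + r := by rw [hv']; field_simp
  have hle : v ≤ v' := by nlinarith
  have hprod : p * (v * v') = α := by
    have : 4 * p * (p * (v * v')) = 4 * p * α := by
      calc 4 * p * (p * (v * v')) = (2 * p * v) * (2 * p * v') := by ring
        _ = 4 * p * α := by rw [e1, e2]; nlinarith
    exact mul_left_cancel₀ (by positivity) this
  have hsum : p * (v + v') = p + α + γ := by linarith
  have hf : ∀ a, p * J a - α + (α + γ) * a = - p * ((a - v) * (a - v')) := by
    intro a
    unfold J
    linear_combination (-a) * hsum + hprod
  have hv0 : 0 ≤ v := by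
    have : r ≤ p + α + γ := by
      refine le_of_sq_le_sq ?_ (by positivity)
      nlinarith [mul_nonneg hp.le hα]
    rw [hv]; apply div_nonneg <;> linarith
  have h1 : (1 - v) * (1 - v') ≤ 0 := by
    have := hf 1
    unfold J at this
    nlinarith
  have hv1 : v ≤ 1 := by
    by_contra! h
    nlinarith
  have hv'1 : 1 ≤ v' := by
    by_contra! h
    nlinarith
  refine ⟨⟨hv0, hv1⟩, fun a ha => ?_, fun a ha => ?_⟩
  · rw [hf]
    have : 0 ≤ (a - v) * (a - v') :=
      mul_nonneg_of_nonpos_of_nonpos (by linarith) (by linarith)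
    nlinarith
  · rw [hf]
    have : (a - v) * (a - v') ≤ 0 :=
      mul_nonpos_of_nonneg_of_nonpos (by linarith [ha.1]) (by linarith [ha.2])
    nlinarith

lemma isBoundaryDensity {p α β γ δ vm vp : ℝ} (hp : 0 < p)
    (hα : 0 ≤ α) (hβ : 0 ≤ β) (hγ : 0 ≤ γ) (hδ : 0 ≤ δ)
    (hvm : vm = (p + α + γ - √((p - α + γ)^2 + 4*α*γ)) / (2*p))
    (hvp : vp = (p - β - δ + √((p - β + δ)^2 + 4*β*δ)) / (2*p)) :
    IsBoundaryDensity p α β γ δ vm vp := by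
  obtain ⟨h1, h2, h3⟩ := left_root_signs hp hα hγ hvm
  have hvp' : 1 - vp = (p + β + δ - √((p - β + δ)^2 + 4*β*δ)) / (2*p) := by
    rw [hvp]; field_simp; ring
  obtain ⟨k1, k2, k3⟩ := left_root_signs hp hβ hδ hvp'
  have hsymm : ∀ a, p * J a + δ - (β + δ) * a = p * J (1 - a) - β + (β + δ) * (1 - a) := by
    intro a; unfold J; ring
  refine ⟨h1, ⟨by linarith [k1.2], by linarith [k1.1]⟩, h2, h3, fun a ha => ?_, fun a ha => ?_⟩
  · rw [hsymm]; exact k2 _ (by linarith)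
  · rw [hsymm]; exact k3 _ ⟨by linarith [ha.2], by linarith [ha.1]⟩

/-! ### Comparison of potentials -/

/-- A quadratic function whose slopes at `0` and `1` are the boundary densities. -/
noncomputable def corrector (vm vp y : ℝ) : ℝ := vm * y + (vp - vm) * y ^ 2 / 2

/-- The derivative of `corrector`. -/
noncomputable def slopeCorrector (vm vp y : ℝ) : ℝ := vm + (vp - vm) * y

lemma hasDerivAt_corrector (vm vp y : ℝ) :
    HasDerivAt (corrector vm vp) (slopeCorrector vm vp y) y := by
  have := ((hasDerivAt_id y).const_mul vm).add
    ((((hasDerivAt_id y).pow 2).const_mul (vp - vm)).div_const 2)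
  refine this.congr_deriv ?_
  simp [slopeCorrector]; ring

lemma hasDerivAt_slopeCorrector (vm vp y : ℝ) :
    HasDerivAt (slopeCorrector vm vp) (vp - vm) y := by
  have := ((hasDerivAt_id y).const_mul (vp - vm)).const_add vm
  exact this.congr_deriv (by simp)

lemma slopeCorrector_mem {vm vp y : ℝ} (hvm : vm ∈ Icc (0:ℝ) 1) (hvp : vp ∈ Icc (0:ℝ) 1)
    (hy : y ∈ Icc (0:ℝ) 1) : slopeCorrector vm vp y ∈ Icc (0:ℝ) 1 := by
  have : slopeCorrector vm vp y = (1 - y) * vm + y * vp := by unfold slopeCorrector; ring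
  rw [this]
  obtain ⟨a, b⟩ := hvm; obtain ⟨c, d⟩ := hvp; obtain ⟨e, f⟩ := hy
  constructor
  · have := mul_nonneg (sub_nonneg.2 f) a
    have := mul_nonneg e c
    linarith
  · have := mul_nonneg (sub_nonneg.2 f) (sub_nonneg.2 b)
    have := mul_nonneg e (sub_nonneg.2 d)
    linarith

lemma hasDerivAt_sq_sub_div (y₀ σ y : ℝ) :
    HasDerivAt (fun y => (y - y₀) ^ 2 / (2 * σ)) ((y - y₀) / σ) y := by
  have := (((hasDerivAt_id y).sub_const y₀).pow 2).div_const (2 * σ)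
  refine this.congr_deriv ?_
  simp
  by_cases h : σ = 0
  · simp [h]
  · field_simp

section Touching

variable {T p α β γ δ ε vm vp : ℝ} {v0 : ℝ → ℝ} {v U : ℝ × ℝ → ℝ}

/-- Sub-solution property at points where the potential is touched from above by
`corrector` plus a quadratic, including boundary points. -/
lemma flux_le_of_touch_above (hε : 0 < ε) {σ : ℝ} (hσ : 0 < σ)
    (B : IsBoundaryDensity p α β γ δ vm vp) (hα : 0 ≤ α) (hβ : 0 ≤ β) (hγ : 0 ≤ γ) (hδ : 0 ≤ δ)
    (S : IsRobinSol T p α β γ δ ε v0 v) (hU : IsPotential T (flux ε p v) v U)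
    {t x y₀ : ℝ} (ht : t ∈ Icc (0:ℝ) T) (hx : x ∈ Icc (0:ℝ) 1) (hy₀ : y₀ ∈ Icc (0:ℝ) 1)
    (hmax : ∀ y ∈ Icc (0:ℝ) 1, U (t, y) - corrector vm vp y - (y - y₀) ^ 2 / (2 * σ)
      ≤ U (t, x) - corrector vm vp x - (x - y₀) ^ 2 / (2 * σ)) :
    flux ε p v (t, x) ≤ ε * (1 + 1 / σ) - p * J (slopeCorrector vm vp x + (x - y₀) / σ) := by
  have hd : ∀ y ∈ Icc (0:ℝ) 1, HasDerivWithinAt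
      (fun y => U (t, y) - corrector vm vp y - (y - y₀) ^ 2 / (2 * σ))
      (v (t, y) - slopeCorrector vm vp y - (y - y₀) / σ) (Icc 0 1) y := fun y hy =>
    ((hU.hasDerivWithinAt_right (mem_rect.2 ⟨ht, hy⟩)).sub
      (hasDerivAt_corrector vm vp y).hasDerivWithinAt).sub
      (hasDerivAt_sq_sub_div y₀ σ y).hasDerivWithinAt
  have hpos : 0 < ε * (1 + 1 / σ) := by positivity
  rcases hx.1.eq_or_lt with rfl | h0
  · have h1 := nonpos_of_hasDerivWithinAt_of_max (hd 0 hx) le_rfl one_pos hmax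
    have hq : (0 - y₀) / σ ≤ 0 := div_nonpos_of_nonpos_of_nonneg (by linarith [hy₀.1]) hσ.le
    have hs : slopeCorrector vm vp 0 = vm := by simp [slopeCorrector]
    rw [hs] at h1 ⊢
    have h2 := B.left_nonpos (vm + (0 - y₀) / σ) (by linarith)
    rw [S.flux_left ht]
    nlinarith [mul_le_mul_of_nonneg_left (sub_nonneg.2 h1) (add_nonneg hα hγ)]
  rcases hx.2.eq_or_lt with rfl | h1
  · have h1 := nonneg_of_hasDerivWithinAt_of_max (hd 1 hx) one_pos le_rfl hmax
    have hq : 0 ≤ (1 - y₀) / σ := div_nonneg (by linarith [hy₀.2]) hσ.le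
    have hs : slopeCorrector vm vp 1 = vp := by simp [slopeCorrector]
    rw [hs] at h1 ⊢
    have h2 := B.right_nonpos (vp + (1 - y₀) / σ) (by linarith)
    rw [S.flux_right ht]
    nlinarith [mul_le_mul_of_nonneg_left h1 (add_nonneg hβ hδ)]
  · have hloc : IsLocalMax (fun y => U (t, y) - corrector vm vp y - (y - y₀) ^ 2 / (2 * σ)) x := by
      filter_upwards [Ioo_mem_nhds h0 h1] with y hy using hmax y (Ioo_subset_Icc_self hy)
    have hd2 : HasDerivAt (fun y => v (t, y) - slopeCorrector vm vp y - (y - y₀) / σ)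
        (Dx v (t, x) - (vp - vm) - 1 / σ) x :=
      ((hasDerivAt_Dx (S.smooth.differentiable (by simp) (t, x))).sub
        (hasDerivAt_slopeCorrector vm vp x)).sub (((hasDerivAt_id x).sub_const y₀).div_const σ)
    obtain ⟨k1, k2⟩ := interior_max_conditions hloc
      (by filter_upwards [Ioo_mem_nhds h0 h1] with y hy using
        (hd y (Ioo_subset_Icc_self hy)).hasDerivAt (Icc_mem_nhds hy.1 hy.2)) hd2
    have hv : v (t, x) = slopeCorrector vm vp x + (x - y₀) / σ := by linarith
    have hvx : Dx v (t, x) ≤ 1 + 1 / σ := by linarith [B.vm_mem.1, B.vp_mem.2]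
    rw [flux, hv]
    nlinarith

/-- Super-solution property at points where the potential is touched from below by
`corrector` minus a quadratic, including boundary points. -/
lemma le_flux_of_touch_below (hε : 0 < ε) {σ : ℝ} (hσ : 0 < σ)
    (B : IsBoundaryDensity p α β γ δ vm vp) (hα : 0 ≤ α) (hβ : 0 ≤ β) (hγ : 0 ≤ γ) (hδ : 0 ≤ δ)
    (S : IsRobinSol T p α β γ δ ε v0 v) (hU : IsPotential T (flux ε p v) v U)
    {t x₀ y : ℝ} (ht : t ∈ Icc (0:ℝ) T) (hy : y ∈ Icc (0:ℝ) 1) (hx₀ : x₀ ∈ Icc (0:ℝ) 1)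
    (hmin : ∀ x ∈ Icc (0:ℝ) 1, U (t, y) - corrector vm vp y + (y - x₀) ^ 2 / (2 * σ)
      ≤ U (t, x) - corrector vm vp x + (x - x₀) ^ 2 / (2 * σ)) :
    - (ε * (1 + 1 / σ)) - p * J (slopeCorrector vm vp y + (x₀ - y) / σ) ≤ flux ε p v (t, y) := by
  have hflip : ∀ a b : ℝ, (a - b) / σ = - ((b - a) / σ) := fun a b => by ring
  have hd : ∀ y ∈ Icc (0:ℝ) 1, HasDerivWithinAt
      (fun y => -(U (t, y) - corrector vm vp y + (y - x₀) ^ 2 / (2 * σ)))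
      (-(v (t, y) - slopeCorrector vm vp y + (y - x₀) / σ)) (Icc 0 1) y := fun y hy =>
    (((hU.hasDerivWithinAt_right (mem_rect.2 ⟨ht, hy⟩)).sub
      (hasDerivAt_corrector vm vp y).hasDerivWithinAt).add
      (hasDerivAt_sq_sub_div x₀ σ y).hasDerivWithinAt).neg
  have hmax : ∀ x ∈ Icc (0:ℝ) 1, -(U (t, x) - corrector vm vp x + (x - x₀) ^ 2 / (2 * σ))
      ≤ -(U (t, y) - corrector vm vp y + (y - x₀) ^ 2 / (2 * σ)) :=
    fun x hx => neg_le_neg (hmin x hx)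
  have hpos : 0 < ε * (1 + 1 / σ) := by positivity
  have hvmem := S.mem (t, y) (mem_rect.2 ⟨ht, hy⟩)
  rw [hflip]
  rcases hy.1.eq_or_lt with rfl | h0
  · have h1 := nonpos_of_hasDerivWithinAt_of_max (hd 0 hy) le_rfl one_pos hmax
    have hq : (0 - x₀) / σ ≤ 0 := div_nonpos_of_nonpos_of_nonneg (by linarith [hx₀.1]) hσ.le
    have hs : slopeCorrector vm vp 0 = vm := by simp [slopeCorrector]
    rw [hs] at h1 ⊢
    have h2 := B.left_nonneg (vm + - ((0 - x₀) / σ)) ⟨by linarith, by linarith [hvmem.2]⟩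
    rw [S.flux_left ht]
    nlinarith [mul_le_mul_of_nonneg_left (sub_nonneg.2 h1) (add_nonneg hα hγ)]
  rcases hy.2.eq_or_lt with rfl | h1
  · have h1 := nonneg_of_hasDerivWithinAt_of_max (hd 1 hy) one_pos le_rfl hmax
    have hq : 0 ≤ (1 - x₀) / σ := div_nonneg (by linarith [hx₀.2]) hσ.le
    have hs : slopeCorrector vm vp 1 = vp := by simp [slopeCorrector]
    rw [hs] at h1 ⊢
    have h2 := B.right_nonneg (vp + - ((1 - x₀) / σ)) ⟨by linarith [hvmem.1], by linarith⟩
    rw [S.flux_right ht]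
    nlinarith [mul_le_mul_of_nonneg_left h1 (add_nonneg hβ hδ)]
  · have hloc : IsLocalMax
        (fun y => -(U (t, y) - corrector vm vp y + (y - x₀) ^ 2 / (2 * σ))) y := by
      filter_upwards [Ioo_mem_nhds h0 h1] with x hx using hmax x (Ioo_subset_Icc_self hx)
    have hd2 : HasDerivAt (fun y => -(v (t, y) - slopeCorrector vm vp y + (y - x₀) / σ))
        (-(Dx v (t, y) - (vp - vm) + 1 / σ)) y :=
      (((hasDerivAt_Dx (S.smooth.differentiable (by simp) (t, y))).sub
        (hasDerivAt_slopeCorrector vm vp y)).add (((hasDerivAt_id y).sub_const x₀).div_const σ)).neg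
    obtain ⟨k1, k2⟩ := interior_max_conditions hloc
      (by filter_upwards [Ioo_mem_nhds h0 h1] with x hx using
        (hd x (Ioo_subset_Icc_self hx)).hasDerivAt (Icc_mem_nhds hx.1 hx.2)) hd2
    have hv : v (t, y) = slopeCorrector vm vp y + - ((y - x₀) / σ) := by linarith
    have hvx : -(1 + 1 / σ) ≤ Dx v (t, y) := by linarith [B.vm_mem.2, B.vp_mem.1]
    rw [flux, hv]
    nlinarith

lemma abs_potential_sub_corrector_le (B : IsBoundaryDensity p α β γ δ vm vp)
    (S : IsRobinSol T p α β γ δ ε v0 v) (hU : IsPotential T (flux ε p v) v U)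
    {t x y : ℝ} (ht : t ∈ Icc (0:ℝ) T) (hx : x ∈ Icc (0:ℝ) 1) (hy : y ∈ Icc (0:ℝ) 1) :
    |(U (t, x) - corrector vm vp x) - (U (t, y) - corrector vm vp y)| ≤ |x - y| := by
  have := (convex_Icc (0:ℝ) 1).norm_image_sub_le_of_norm_hasDerivWithin_le
    (f := fun y => U (t, y) - corrector vm vp y)
    (f' := fun y => v (t, y) - slopeCorrector vm vp y) (C := 1)
    (fun y hy => (hU.hasDerivWithinAt_right (mem_rect.2 ⟨ht, hy⟩)).sub
      (hasDerivAt_corrector vm vp y).hasDerivWithinAt) ?_ hy hx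
  · simpa using this
  · intro y hy
    have h1 := S.mem (t, y) (mem_rect.2 ⟨ht, hy⟩)
    have h2 := slopeCorrector_mem B.vm_mem B.vp_mem hy
    rw [Real.norm_eq_abs, abs_le]
    constructor <;> linarith [h1.1, h1.2, h2.1, h2.2]

end Touching

/-- Quantitative comparison of the potentials of two viscous approximations. -/
lemma potential_sub_le {T p α β γ δ ε η vm vp σ : ℝ} {v0 : ℝ → ℝ} {v₁ U₁ v₂ U₂ : ℝ × ℝ → ℝ}
    (hp : 0 < p) (hε : 0 < ε) (hη : 0 < η) (hσ : 0 < σ) (hσ1 : σ ≤ 1) (hεσ : ε ≤ σ ^ 2)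
    (hησ : η ≤ σ ^ 2) (B : IsBoundaryDensity p α β γ δ vm vp)
    (hα : 0 ≤ α) (hβ : 0 ≤ β) (hγ : 0 ≤ γ) (hδ : 0 ≤ δ)
    (S₁ : IsRobinSol T p α β γ δ ε v0 v₁) (hU₁ : IsPotential T (flux ε p v₁) v₁ U₁)
    (S₂ : IsRobinSol T p α β γ δ η v0 v₂) (hU₂ : IsPotential T (flux η p v₂) v₂ U₂)
    (h0 : ∀ x ∈ Icc (0:ℝ) 1, U₁ (0, x) = U₂ (0, x)) :
    ∀ z ∈ rect T, U₁ z - U₂ z ≤ ((5 + 11 * p) * T + 1) * σ := by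
  rintro ⟨t', x'⟩ hz
  set l := (5 + 11 * p) * σ with hl
  have hl0 : 0 < l := by positivity
  let D : ℝ × ℝ × ℝ → ℝ := fun w => (U₁ (w.1, w.2.1) - corrector vm vp w.2.1)
    - (U₂ (w.1, w.2.2) - corrector vm vp w.2.2) - (w.2.1 - w.2.2) ^ 2 / (2 * σ) - l * w.1
  have hKc : IsCompact (Icc (0:ℝ) T ×ˢ (Icc (0:ℝ) 1 ×ˢ Icc (0:ℝ) 1)) :=
    isCompact_Icc.prod (isCompact_Icc.prod isCompact_Icc)
  have hcc : Continuous (corrector vm vp) := by unfold corrector; fun_prop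
  have hDc : ContinuousOn D (Icc (0:ℝ) T ×ˢ (Icc (0:ℝ) 1 ×ˢ Icc (0:ℝ) 1)) := by
    refine ContinuousOn.sub (ContinuousOn.sub (ContinuousOn.sub (ContinuousOn.sub ?_ ?_)
      (ContinuousOn.sub ?_ ?_)) ?_) ?_
    · exact hU₁.continuousOn.comp (by fun_prop) fun w hw => ⟨hw.1, hw.2.1⟩
    · fun_prop
    · exact hU₂.continuousOn.comp (by fun_prop) fun w hw => ⟨hw.1, hw.2.2⟩
    · fun_prop
    · fun_prop
    · fun_prop
  obtain ⟨⟨t, x, y⟩, hm, hmax⟩ := hKc.exists_isMaxOn ⟨(t', x', x'), hz.1, hz.2, hz.2⟩ hDc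
  have ht : t ∈ Icc (0:ℝ) T := hm.1
  have hx : x ∈ Icc (0:ℝ) 1 := hm.2.1
  have hy : y ∈ Icc (0:ℝ) 1 := hm.2.2
  have hD : ∀ t₁ ∈ Icc (0:ℝ) T, ∀ x₁ ∈ Icc (0:ℝ) 1, ∀ y₁ ∈ Icc (0:ℝ) 1,
      (U₁ (t₁, x₁) - corrector vm vp x₁) - (U₂ (t₁, y₁) - corrector vm vp y₁)
        - (x₁ - y₁) ^ 2 / (2 * σ) - l * t₁ ≤
      (U₁ (t, x) - corrector vm vp x) - (U₂ (t, y) - corrector vm vp y)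
        - (x - y) ^ 2 / (2 * σ) - l * t :=
    fun t₁ ht₁ x₁ hx₁ y₁ hy₁ => hmax (a := (t₁, x₁, y₁)) ⟨ht₁, hx₁, hy₁⟩
  have hgoal := hD t' hz.1 x' hz.2 x' hz.2
  simp only [sub_self, ne_eq, OfNat.ofNat_ne_zero, not_false_eq_true, zero_pow, zero_div,
    sub_zero] at hgoal
  have hlt' : l * t' ≤ l * T := mul_le_mul_of_nonneg_left hz.1.2 hl0.le
  rcases ht.1.eq_or_lt with rfl | htpos
  · have h1 := abs_le.1 (abs_potential_sub_corrector_le B S₁ hU₁ ht hx hy)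
    have h2 : |x - y| - (x - y) ^ 2 / (2 * σ) ≤ σ := by
      rw [sub_le_iff_le_add, ← sub_le_iff_le_add', le_div_iff₀ (by positivity), ← sq_abs (x - y)]
      nlinarith [sq_nonneg (|x - y| - σ)]
    rw [← h0 y hy] at hgoal
    have : l * T + σ = ((5 + 11 * p) * T + 1) * σ := by rw [hl]; ring
    linarith [h1.2]
  · exfalso
    have hxy : |x - y| ≤ 2 * σ := by
      have h1 := hD t ht y hy y hy
      simp only [sub_self, ne_eq, OfNat.ofNat_ne_zero, not_false_eq_true, zero_pow, zero_div,
        sub_zero] at h1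
      have h2 := abs_le.1 (abs_potential_sub_corrector_le B S₁ hU₁ ht hx hy)
      have h3 : (x - y) ^ 2 / (2 * σ) ≤ |x - y| := by linarith [h2.2]
      rw [div_le_iff₀ (by positivity), ← sq_abs] at h3
      by_contra! h
      nlinarith [abs_nonneg (x - y)]
    have k1 := flux_le_of_touch_above hε hσ B hα hβ hγ hδ S₁ hU₁ ht hx hy
      (fun x₁ hx₁ => by linarith [hD t ht x₁ hx₁ y hy])
    have k2 := le_flux_of_touch_below hη hσ B hα hβ hγ hδ S₂ hU₂ ht hy hx
      (fun y₁ hy₁ => by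
        have := hD t ht x hx y₁ hy₁
        rw [← neg_sub x y₁, ← neg_sub x y, neg_sq, neg_sq]
        linarith)
    have k3 : l ≤ flux ε p v₁ (t, x) - flux η p v₂ (t, y) := by
      have hd : HasDerivWithinAt (fun s => (U₁ (s, x) - U₂ (s, y)) - l * s)
          ((flux ε p v₁ (t, x) - flux η p v₂ (t, y)) - l * 1) (Icc 0 T) t :=
        ((hU₁.hasDerivWithinAt_left (mem_rect.2 ⟨ht, hx⟩)).sub
          (hU₂.hasDerivWithinAt_left (mem_rect.2 ⟨ht, hy⟩))).sub
          ((hasDerivWithinAt_id t _).const_mul l)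
      have := nonneg_of_hasDerivWithinAt_of_max hd htpos ht.2
        (fun s hs => by linarith [hD s hs x hx y hy])
      linarith
    have hq : |(x - y) / σ| ≤ 2 := by
      rw [abs_div, abs_of_pos hσ, div_le_iff₀ hσ]; exact hxy
    obtain ⟨a1, a2⟩ := slopeCorrector_mem B.vm_mem B.vp_mem hx
    obtain ⟨b1, b2⟩ := slopeCorrector_mem B.vm_mem B.vp_mem hy
    have hab : |slopeCorrector vm vp y - slopeCorrector vm vp x| ≤ 2 * σ := by
      have : slopeCorrector vm vp y - slopeCorrector vm vp x = (vp - vm) * (y - x) := by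
        unfold slopeCorrector; ring
      rw [this, abs_mul, abs_sub_comm y x]
      have h1 : |vp - vm| ≤ 1 := by
        rw [abs_le]
        constructor <;> linarith [B.vm_mem.1, B.vm_mem.2, B.vp_mem.1, B.vp_mem.2]
      nlinarith [abs_nonneg (x - y)]
    obtain ⟨q1, q2⟩ := abs_le.1 hq
    have hJ : J (slopeCorrector vm vp y + (x - y) / σ) - J (slopeCorrector vm vp x + (x - y) / σ)
        ≤ 10 * σ := by
      generalize slopeCorrector vm vp y = b at *
      generalize slopeCorrector vm vp x = a at *
      generalize (x - y) / σ = q at *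
      have : J (b + q) - J (a + q) = (b - a) * (1 - a - b - 2 * q) := by unfold J; ring
      rw [this]
      refine (le_abs_self _).trans ?_
      rw [abs_mul]
      have h5 : |1 - a - b - 2 * q| ≤ 5 := by
        rw [abs_le]; constructor <;> linarith
      calc |b - a| * |1 - a - b - 2 * q| ≤ (2 * σ) * 5 := by gcongr
        _ = 10 * σ := by ring
    have hε2 : ∀ e ≤ σ ^ 2, e * (1 + 1 / σ) ≤ 2 * σ := by
      intro e he
      have : σ ^ 2 * (1 + 1 / σ) = σ ^ 2 + σ := by field_simp
      have h1 : 0 ≤ 1 + 1 / σ := by positivity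
      nlinarith
    have e1 := hε2 ε hεσ
    have e2 := hε2 η hησ
    have : p * (J (slopeCorrector vm vp y + (x - y) / σ)
        - J (slopeCorrector vm vp x + (x - y) / σ)) ≤ p * (10 * σ) :=
      mul_le_mul_of_nonneg_left hJ hp.le
    have hpσ := mul_pos hp hσ
    nlinarith

/-! ### Energy and entropy estimates -/

/-- Green's formula on a rectangle. -/
lemma integral_rect_divergence {f g ft gx : ℝ × ℝ → ℝ} {a₁ b₁ a₂ b₂ : ℝ}
    (h₁ : a₁ ≤ b₁) (h₂ : a₂ ≤ b₂) (hf : ContDiff ℝ 1 f) (hg : ContDiff ℝ 1 g)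
    (hft : ∀ t x, HasDerivAt (fun s => f (s, x)) (ft (t, x)) t)
    (hgx : ∀ t x, HasDerivAt (fun y => g (t, y)) (gx (t, x)) x) :
    ∫ z in Icc a₁ b₁ ×ˢ Icc a₂ b₂, (ft z + gx z) =
      ((∫ t in a₁..b₁, g (t, b₂)) - ∫ t in a₁..b₁, g (t, a₂)) + (∫ x in a₂..b₂, f (b₁, x))
        - ∫ x in a₂..b₂, f (a₁, x) := by
  have hdf := hf.differentiable (by simp)
  have hdg := hg.differentiable (by simp)
  have e1 : ∀ z, ft z = fderiv ℝ f z (1, 0) := fun z =>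
    (hft z.1 z.2).unique (hasDerivAt_Dt (hdf z))
  have e2 : ∀ z, gx z = fderiv ℝ g z (0, 1) := fun z =>
    (hgx z.1 z.2).unique (hasDerivAt_Dx (hdg z))
  simp only [e1, e2]
  have hc : Continuous fun z => fderiv ℝ f z (1, 0) + fderiv ℝ g z (0, 1) := by
    have h1 := hf.continuous_fderiv (by simp)
    have h2 := hg.continuous_fderiv (by simp)
    fun_prop
  have := integral2_divergence_prod_of_hasFDerivAt f g (fderiv ℝ f) (fderiv ℝ g) a₁ a₂ b₁ b₂
    hf.continuous.continuousOn hg.continuous.continuousOn (fun z _ => (hdf z).hasFDerivAt)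
    (fun z _ => (hdg z).hasFDerivAt)
    (hc.continuousOn.integrableOn_compact (isCompact_uIcc.prod isCompact_uIcc))
  rw [← this, Measure.volume_eq_prod, setIntegral_prod _
    (hc.continuousOn.integrableOn_compact (isCompact_Icc.prod isCompact_Icc)),
    intervalIntegral.integral_of_le h₁, integral_Icc_eq_integral_Ioc]
  refine setIntegral_congr_fun measurableSet_Ioc fun t _ => ?_
  rw [intervalIntegral.integral_of_le h₂, integral_Icc_eq_integral_Ioc]

lemma abs_integral_rect_le {f : ℝ × ℝ → ℝ} {a₁ b₁ a₂ b₂ C : ℝ} (h₁ : a₁ ≤ b₁) (h₂ : a₂ ≤ b₂)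
    (hC : ∀ z ∈ Icc a₁ b₁ ×ˢ Icc a₂ b₂, |f z| ≤ C) :
    |∫ z in Icc a₁ b₁ ×ˢ Icc a₂ b₂, f z| ≤ C * ((b₁ - a₁) * (b₂ - a₂)) := by
  have := norm_setIntegral_le_of_norm_le_const (μ := volume) (f := f)
    (isCompact_Icc.prod isCompact_Icc : IsCompact (Icc a₁ b₁ ×ˢ Icc a₂ b₂)).measure_lt_top hC
  have hvol : volume.real (Icc a₁ b₁ ×ˢ Icc a₂ b₂) = (b₁ - a₁) * (b₂ - a₂) := by
    rw [Measure.volume_eq_prod, measureReal_prod_prod]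
    simp [h₁, h₂]
  rwa [hvol] at this

lemma abs_interval_integral_le {f : ℝ → ℝ} {a b C : ℝ} (h : a ≤ b)
    (hC : ∀ x ∈ Icc a b, |f x| ≤ C) : |∫ x in a..b, f x| ≤ C * (b - a) := by
  have := intervalIntegral.norm_integral_le_of_norm_le_const (f := f) (a := a) (b := b) (C := C)
    (fun x hx => hC x (by rw [uIoc_of_le h] at hx; exact Ioc_subset_Icc_self hx))
  rwa [abs_of_nonneg (sub_nonneg.2 h)] at this

lemma IsRobinSol.energy {T p α β γ δ ε C M t : ℝ} {v0 : ℝ → ℝ} {v : ℝ × ℝ → ℝ} (hp : 0 < p)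
    (hv0 : ContDiff ℝ (⊤ : ℕ∞) v0) (hv0b : ∀ x ∈ Icc (0:ℝ) 1, v0 x ∈ Icc (0:ℝ) 1)
    (hC : ∀ x ∈ Icc (0:ℝ) 1, |deriv v0 x| ≤ C)
    (S : IsRobinSol T p α β γ δ ε v0 v) (hM : ∀ z ∈ rect T, |flux ε p v z| ≤ M)
    (ht : t ∈ Icc (0:ℝ) T) :
    (∫ x in (0:ℝ)..1, (v (t, x) - v0 x) ^ 2 / 2)
      + ∫ z in Icc (0:ℝ) t ×ˢ Icc (0:ℝ) 1, ε * Dx v z ^ 2 ≤ (C * M + 2 * (M + p)) * t := by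
  have hm := contDiff_flux (ε := ε) (p := p) S.smooth
  have hdv := S.smooth.differentiable (by simp)
  have hdm := hm.differentiable (by simp)
  have hdx := (contDiff_Dx S.smooth).continuous
  have hd0 := hv0.differentiable (by simp)
  have hc0 : Continuous (deriv v0) := hv0.continuous_deriv (by simp)
  have hsub : ∀ z ∈ Icc (0:ℝ) t ×ˢ Icc (0:ℝ) 1, z ∈ rect T := fun z hz =>
    ⟨⟨hz.1.1, hz.1.2.trans ht.2⟩, hz.2⟩
  have hM0 : 0 ≤ M := (abs_nonneg _).trans (hM (0, 0) (mem_rect.2 ⟨⟨le_rfl, ht.1.trans ht.2⟩,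
    by simp⟩))
  let g : ℝ × ℝ → ℝ := fun z => -((v z - v0 z.2) * flux ε p v z
    + p * (v z ^ 2 / 2 - v z ^ 3 / 3))
  have hgb : ∀ z ∈ rect T, |g z| ≤ M + p := by
    intro z hz
    obtain ⟨a1, a2⟩ := S.mem z hz
    obtain ⟨b1, b2⟩ := hv0b z.2 hz.2
    have h1 : |v z - v0 z.2| ≤ 1 := by rw [abs_le]; constructor <;> linarith
    have h2 : |p * (v z ^ 2 / 2 - v z ^ 3 / 3)| ≤ p := by
      rw [abs_mul, abs_of_pos hp]
      have h3 : |v z ^ 2 / 2 - v z ^ 3 / 3| ≤ 1 := by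
        rw [abs_le]
        have s1 : v z ^ 2 ≤ 1 := by nlinarith
        have s2 : v z ^ 3 ≤ v z ^ 2 := by nlinarith [sq_nonneg (v z)]
        have s3 : 0 ≤ v z ^ 3 := by positivity
        constructor <;> nlinarith
      nlinarith
    simp only [g, abs_neg]
    refine (abs_add_le _ _).trans (add_le_add ?_ h2)
    rw [abs_mul]
    have := hM z hz
    nlinarith [abs_nonneg (flux ε p v z), abs_nonneg (v z - v0 z.2)]
  have key := integral_rect_divergence (f := fun z => (v z - v0 z.2) ^ 2 / 2) (g := g)
    (ft := fun z => (v z - v0 z.2) * Dt v z)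
    (gx := fun z => -((Dx v z - deriv v0 z.2) * flux ε p v z
      + (v z - v0 z.2) * Dx (flux ε p v) z + p * (J (v z) * Dx v z)))
    ht.1 zero_le_one
    (by have := S.smooth.of_le (m := 1) (by simp)
        have := hv0.of_le (m := 1) (by simp)
        fun_prop)
    (by have := S.smooth.of_le (m := 1) (by simp)
        have := hv0.of_le (m := 1) (by simp)
        have := hm.of_le (m := 1) (by simp)
        fun_prop)
    (fun s x => by
      refine ((((hasDerivAt_Dt (hdv (s, x))).sub_const (v0 x)).pow 2).div_const 2).congr_deriv ?_
      push_cast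
      ring)
    (fun s x => by
      have h1 := hasDerivAt_Dx (hdv (s, x))
      have h2 := hasDerivAt_Dx (hdm (s, x))
      have h3 := (hd0 x).hasDerivAt
      refine ((((h1.sub h3).mul h2).add
        ((((h1.pow 2).div_const 2).sub ((h1.pow 3).div_const 3)).const_mul p)).neg).congr_deriv ?_
      push_cast
      rw [Pi.sub_apply]
      unfold J
      ring)
  have hcm := hm.continuous
  have hcongr : ∫ z in Icc (0:ℝ) t ×ˢ Icc (0:ℝ) 1, ((v z - v0 z.2) * Dt v z
      + -((Dx v z - deriv v0 z.2) * flux ε p v z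
      + (v z - v0 z.2) * Dx (flux ε p v) z + p * (J (v z) * Dx v z)))
      = (∫ z in Icc (0:ℝ) t ×ˢ Icc (0:ℝ) 1, deriv v0 z.2 * flux ε p v z)
        - ∫ z in Icc (0:ℝ) t ×ˢ Icc (0:ℝ) 1, ε * Dx v z ^ 2 := by
    rw [← MeasureTheory.integral_sub]
    · refine setIntegral_congr_fun (measurableSet_Icc.prod measurableSet_Icc) fun z hz => ?_
      rw [S.Dx_flux (hsub z hz)]
      unfold flux
      ring
    · exact (Continuous.continuousOn (by fun_prop)).integrableOn_compact
        (isCompact_Icc.prod isCompact_Icc)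
    · exact (Continuous.continuousOn (by fun_prop)).integrableOn_compact
        (isCompact_Icc.prod isCompact_Icc)
  rw [hcongr] at key
  have hzero : ∫ x in (0:ℝ)..1, (v (0, x) - v0 x) ^ 2 / 2 = 0 := by
    rw [intervalIntegral.integral_congr (g := fun _ => (0:ℝ))]
    · simp
    · intro x hx
      rw [uIcc_of_le zero_le_one] at hx
      simp [S.init x hx]
  simp only [hzero] at key
  have b1 := (abs_le.1 (abs_integral_rect_le (f := fun z => deriv v0 z.2 * flux ε p v z)
    (C := C * M) ht.1 zero_le_one (fun z hz => by
      rw [abs_mul]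
      exact mul_le_mul (hC _ hz.2) (hM z (hsub z hz)) (abs_nonneg _)
        ((abs_nonneg _).trans (hC _ hz.2))))).2
  have b2 := (abs_le.1 (abs_interval_integral_le (f := fun s => g (s, 0)) (C := M + p) ht.1
    (fun s hs => hgb _ (hsub _ ⟨hs, by simp⟩)))).2
  have b3 := (abs_le.1 (abs_interval_integral_le (f := fun s => g (s, 1)) (C := M + p) ht.1
    (fun s hs => hgb _ (hsub _ ⟨hs, by simp⟩)))).1
  simp only [sub_zero] at b1 b2 b3
  nlinarith

/-- The viscous entropy flux `p Q(v) - F'(v) ε ∂ₓ v`. -/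
noncomputable def entropyFlux (ε p : ℝ) (F Q : ℝ → ℝ) (v : ℝ × ℝ → ℝ) (z : ℝ × ℝ) : ℝ :=
  p * Q (v z) - deriv F (v z) * (ε * Dx v z)

lemma IsLaxPair.continuous_deriv {F Q : ℝ → ℝ} (h : IsLaxPair F Q) : Continuous (deriv F) :=
  h.1.continuous_deriv (by simp)

lemma IsLaxPair.contDiff_deriv {F Q : ℝ → ℝ} (h : IsLaxPair F Q) : ContDiff ℝ 1 (deriv F) :=
  ((contDiff_succ_iff_deriv (n := 1)).1 (by rw [one_add_one_eq_two]; exact h.1)).2.2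

lemma IsRobinSol.continuous_entropyFlux {T p α β γ δ ε : ℝ} {v0 : ℝ → ℝ} {v : ℝ × ℝ → ℝ}
    (S : IsRobinSol T p α β γ δ ε v0 v) {F Q : ℝ → ℝ} (hFQ : IsLaxPair F Q) :
    Continuous (entropyFlux ε p F Q v) := by
  have h1 := hFQ.continuous_deriv
  have h2 := hFQ.2.1.continuous
  have h3 := S.smooth.continuous
  have h4 := (contDiff_Dx S.smooth).continuous
  unfold entropyFlux
  fun_prop

/-- The entropy inequality for viscous solutions, localized to `x₁ ≤ x ≤ x₂`. -/
lemma IsRobinSol.entropy_inequality {T p α β γ δ ε x₁ x₂ : ℝ} {v0 : ℝ → ℝ} {v : ℝ × ℝ → ℝ}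
    (hT : 0 < T) (hε : 0 < ε) (S : IsRobinSol T p α β γ δ ε v0 v) {F Q : ℝ → ℝ}
    (hFQ : IsLaxPair F Q) {ψ : ℝ × ℝ → ℝ} (hψ : ContDiff ℝ 1 ψ) (hψ0 : ∀ z ∈ rect T, 0 ≤ ψ z)
    (hx₁ : 0 ≤ x₁) (hx : x₁ ≤ x₂) (hx₂ : x₂ ≤ 1) :
    ((∫ t in (0:ℝ)..T, ψ (t, x₂) * entropyFlux ε p F Q v (t, x₂))
      - ∫ t in (0:ℝ)..T, ψ (t, x₁) * entropyFlux ε p F Q v (t, x₁))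
      + (∫ x in x₁..x₂, ψ (T, x) * F (v (T, x))) - ∫ x in x₁..x₂, ψ (0, x) * F (v (0, x))
    ≤ ∫ z in Icc (0:ℝ) T ×ˢ Icc x₁ x₂,
        (Dt ψ z * F (v z) + Dx ψ z * entropyFlux ε p F Q v z) := by
  have hdv := S.smooth.differentiable (by simp)
  have hdx := (contDiff_Dx S.smooth).differentiable (by simp)
  have hdψ := hψ.differentiable (by simp)
  have hcF' := hFQ.contDiff_deriv
  obtain ⟨hF, hQ, hQ', hF''⟩ := id hFQ
  have hsm : ContDiff ℝ 1 v := S.smooth.of_le (by simp)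
  have hsmx : ContDiff ℝ 1 (Dx v) := (contDiff_Dx S.smooth).of_le (by simp)
  have hF1 : ContDiff ℝ 1 F := hF.of_le (by norm_num)
  have hQ1 : ContDiff ℝ 1 Q := hQ.of_le (by norm_num)
  have hB : ContDiff ℝ 1 (entropyFlux ε p F Q v) := by
    unfold entropyFlux
    exact ((contDiff_const.mul (hQ1.comp hsm))).sub ((hcF'.comp hsm).mul (contDiff_const.mul hsmx))
  have key := integral_rect_divergence (f := fun z => ψ z * F (v z))
    (g := fun z => ψ z * entropyFlux ε p F Q v z)
    (ft := fun z => Dt ψ z * F (v z) + ψ z * (deriv F (v z) * Dt v z))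
    (gx := fun z => Dx ψ z * entropyFlux ε p F Q v z
      + ψ z * (p * (deriv Q (v z) * Dx v z) - (deriv (deriv F) (v z) * Dx v z * (ε * Dx v z)
        + deriv F (v z) * (ε * Dx (Dx v) z))))
    hT.le hx (hψ.mul (hF1.comp hsm)) (hψ.mul hB)
    (fun s x => (hasDerivAt_Dt (hdψ (s, x))).mul
      ((hF1.differentiable (by simp) _).hasDerivAt.comp s (hasDerivAt_Dt (hdv (s, x)))))
    (fun s x => (hasDerivAt_Dx (hdψ (s, x))).mul
      ((((hQ1.differentiable (by simp) _).hasDerivAt.comp x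
          (hasDerivAt_Dx (hdv (s, x)))).const_mul p).sub
        (((hcF'.differentiable (by simp) _).hasDerivAt.comp x (hasDerivAt_Dx (hdv (s, x)))).mul
          ((hasDerivAt_Dx (hdx (s, x))).const_mul ε))))
  rw [← key]
  have cψt : Continuous (Dt ψ) := (hψ.continuous_fderiv (by simp)).clm_apply continuous_const
  have cψx : Continuous (Dx ψ) := (hψ.continuous_fderiv (by simp)).clm_apply continuous_const
  have cF'' : Continuous (deriv (deriv F)) := hcF'.continuous_deriv (by simp)
  have cF' := hFQ.continuous_deriv
  have cQ' : Continuous (deriv Q) := hQ.continuous_deriv (by simp)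
  have cvt : Continuous (Dt v) := (contDiff_Dt S.smooth).continuous
  have cvxx : Continuous (Dx (Dx v)) := (contDiff_Dx (contDiff_Dx S.smooth)).continuous
  have c1 := hψ.continuous
  have c2 := hF.continuous
  have c3 := hsm.continuous
  have c4 := hsmx.continuous
  have c5 := hB.continuous
  refine setIntegral_mono_on ?_ ?_ (measurableSet_Icc.prod measurableSet_Icc) ?_
  · exact (Continuous.continuousOn (by fun_prop)).integrableOn_compact
      (isCompact_Icc.prod isCompact_Icc)
  · exact (Continuous.continuousOn (by fun_prop)).integrableOn_compact
      (isCompact_Icc.prod isCompact_Icc)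
  · intro z hz
    have hzr : z ∈ rect T := ⟨hz.1, hx₁.trans hz.2.1, hz.2.2.trans hx₂⟩
    have hv := S.mem z hzr
    rw [S.pde z hzr, hQ' _ hv]
    have h0 : 0 ≤ ψ z * (deriv (deriv F) (v z) * (ε * Dx v z ^ 2)) :=
      mul_nonneg (hψ0 z hzr) (mul_nonneg (hF'' _ hv) (by positivity))
    nlinarith

/-! ### The limit potential -/

open scoped Topology NNReal

/-- A family `u ε` of viscous solutions with potentials `V ε` converging uniformly to a Lipschitz
function `U` as the viscosity vanishes. -/
structure IsViscousFamily (T p α β γ δ M : ℝ) (K : ℝ≥0) (v0 : ℝ → ℝ) (u V : ℝ → ℝ × ℝ → ℝ)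
    (U : ℝ × ℝ → ℝ) : Prop where
  sol : ∀ ε > 0, IsRobinSol T p α β γ δ ε v0 (u ε)
  pot : ∀ ε > 0, IsPotential T (flux ε p (u ε)) (u ε) (V ε)
  abs_flux_le : ∀ ε > 0, ε ≤ 1 → ∀ z ∈ rect T, |flux ε p (u ε) z| ≤ M
  lim : TendstoUniformlyOn V U (𝓝[>] 0) (rect T)
  lip : LipschitzWith K U

lemma IsPotential.initial_eq {T : ℝ} (hT : 0 < T) {m₁ v₁ U₁ m₂ v₂ U₂ : ℝ × ℝ → ℝ}
    (h₁ : IsPotential T m₁ v₁ U₁) (h₂ : IsPotential T m₂ v₂ U₂) (h0 : U₁ (0, 0) = U₂ (0, 0))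
    (hv : ∀ x ∈ Icc (0:ℝ) 1, v₁ (0, x) = v₂ (0, x)) :
    ∀ x ∈ Icc (0:ℝ) 1, U₁ (0, x) = U₂ (0, x) := by
  intro x hx
  have := (convex_Icc (0:ℝ) 1).norm_image_sub_le_of_norm_hasDerivWithin_le
    (f := fun y => U₁ (0, y) - U₂ (0, y)) (f' := fun y => v₁ (0, y) - v₂ (0, y)) (C := 0)
    (fun y hy => (h₁.hasDerivWithinAt_right (mem_rect.2 ⟨⟨le_rfl, hT.le⟩, hy⟩)).sub
      (h₂.hasDerivWithinAt_right (mem_rect.2 ⟨⟨le_rfl, hT.le⟩, hy⟩)))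
    (fun y hy => by simp [hv y hy]) (left_mem_Icc.2 zero_le_one) hx
  rw [h0, sub_self, sub_zero, zero_mul] at this
  exact sub_eq_zero.1 (norm_le_zero_iff.1 this)

lemma exists_isViscousFamily {T p α β γ δ vm vp : ℝ} {v0 : ℝ → ℝ} {u : ℝ → ℝ × ℝ → ℝ}
    (hT : 0 < T) (hp : 0 < p) (hα : 0 ≤ α) (hβ : 0 ≤ β) (hγ : 0 ≤ γ) (hδ : 0 ≤ δ)
    (B : IsBoundaryDensity p α β γ δ vm vp) (hv0 : ContDiff ℝ (⊤ : ℕ∞) v0)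
    (S : ∀ ε > 0, IsRobinSol T p α β γ δ ε v0 (u ε)) :
    ∃ M K V U, IsViscousFamily T p α β γ δ M K v0 u V U := by
  obtain ⟨C, hC⟩ := (isCompact_Icc (a := (0:ℝ)) (b := 1)).exists_bound_of_continuousOn
    (hv0.continuous_deriv (by simp)).continuousOn
  choose! V hV hV0 using fun ε (hε : 0 < ε) => (S ε hε).exists_potential
  set M := α + β + γ + δ + C + p with hMdef
  have hM : ∀ ε > 0, ε ≤ 1 → ∀ z ∈ rect T, |flux ε p (u ε) z| ≤ M := fun ε hε hε1 =>
    (S ε hε).abs_flux_le hT hp hα hβ hγ hδ hε hε1 hC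
  set D := (5 + 11 * p) * T + 1 with hD
  have hD0 : 0 < D := by positivity
  have hsub : ∀ ε > 0, ∀ η > 0, ∀ σ > 0, σ ≤ 1 → ε ≤ σ ^ 2 → η ≤ σ ^ 2 → ∀ z ∈ rect T,
      V ε z - V η z ≤ D * σ := fun ε hε η hη σ hσ hσ1 h1 h2 =>
    potential_sub_le hp hε hη hσ hσ1 h1 h2 B hα hβ hγ hδ (S ε hε) (hV ε hε) (S η hη) (hV η hη)
      ((hV ε hε).initial_eq hT (hV η hη) (by rw [hV0 ε hε, hV0 η hη]) fun x hx => by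
        rw [(S ε hε).init x hx, (S η hη).init x hx])
  have hcauchy : UniformCauchySeqOn V (𝓝[>] 0) (rect T) := by
    intro s hs
    obtain ⟨κ, hκ, hκs⟩ := Metric.mem_uniformity_dist.1 hs
    obtain ⟨σ, hσ, hσ1, hσκ⟩ : ∃ σ > 0, σ ≤ 1 ∧ D * σ < κ := by
      refine ⟨min 1 (κ / (2 * D)), by positivity, min_le_left _ _, ?_⟩
      calc D * min 1 (κ / (2 * D)) ≤ D * (κ / (2 * D)) := by gcongr; exact min_le_right _ _
        _ = κ / 2 := by field_simp
        _ < κ := by linarith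
    have hev : ∀ᶠ ε in 𝓝[>] (0:ℝ), 0 < ε ∧ ε ≤ σ ^ 2 := by
      filter_upwards [Ioc_mem_nhdsGT (show (0:ℝ) < σ ^ 2 by positivity)] with ε hε using hε
    filter_upwards [hev.prod_mk hev] with m hm z hz
    apply hκs
    rw [Real.dist_eq]
    refine lt_of_le_of_lt (abs_le.2 ⟨?_, ?_⟩) hσκ
    · have := hsub m.2 hm.2.1 m.1 hm.1.1 σ hσ hσ1 hm.2.2 hm.1.2 z hz
      linarith
    · exact hsub m.1 hm.1.1 m.2 hm.2.1 σ hσ hσ1 hm.1.2 hm.2.2 z hz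
  have hlim : ∀ z ∈ rect T, ∃ l, Tendsto (fun ε => V ε z) (𝓝[>] 0) (𝓝 l) := fun z hz =>
    cauchy_map_iff_exists_tendsto.1 (hcauchy.cauchy_map hz)
  choose! W hW using hlim
  have hlip : LipschitzOnWith (M + 1).toNNReal W (rect T) := by
    refine LipschitzOnWith.of_dist_le_mul fun z hz z' hz' => ?_
    have h0 : (0:ℝ) < 1 := one_pos
    refine le_of_tendsto ((hW z hz).dist (hW z' hz')) ?_
    filter_upwards [Ioc_mem_nhdsGT h0] with ε hε
    rw [Real.dist_eq, dist_eq_norm]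
    refine ((hV ε hε.1).abs_sub_le (hM ε hε.1 hε.2) (S ε hε.1).mem hz' hz).trans ?_
    gcongr
    exact Real.le_coe_toNNReal _
  obtain ⟨U, hU, hWU⟩ := hlip.extend_real
  exact ⟨M, _, V, U, S, hV, hM,
    (hcauchy.tendstoUniformlyOn_of_tendsto hW).congr_right hWU, hU⟩

namespace IsViscousFamily

variable {T p α β γ δ M : ℝ} {K : ℝ≥0} {v0 : ℝ → ℝ} {u V : ℝ → ℝ × ℝ → ℝ} {U : ℝ × ℝ → ℝ}

/-- Near a differentiability point of the limit potential some viscous solution almost attains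
the values of the derivatives, with an upper bound on its viscous flux. -/
lemma exists_touching (H : IsViscousFamily T p α β γ δ M K v0 u V U) {z₀ : ℝ × ℝ}
    (hz₀ : z₀ ∈ Ioo (0:ℝ) T ×ˢ Ioo (0:ℝ) 1) (hd : DifferentiableAt ℝ U z₀) {κ : ℝ} (hκ : 0 < κ) :
    ∃ ε > 0, ∃ z ∈ rect T, |flux ε p (u ε) z - Dt U z₀| ≤ 8 * κ ∧ |u ε z - Dx U z₀| ≤ 8 * κ ∧
      ε * Dx (u ε) z ≤ 8 * κ := by
  have hopen : IsOpen (Ioo (0:ℝ) T ×ˢ Ioo (0:ℝ) 1) := isOpen_Ioo.prod isOpen_Ioo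
  have hev : ∀ᶠ z in 𝓝 z₀, z ∈ Ioo (0:ℝ) T ×ˢ Ioo (0:ℝ) 1 ∧
      |U z - U z₀ - fderiv ℝ U z₀ (z - z₀)| ≤ κ * ‖z - z₀‖ := by
    filter_upwards [hopen.mem_nhds hz₀, hd.hasFDerivAt.isLittleO.def hκ] with z h1 h2
    exact ⟨h1, h2⟩
  obtain ⟨r, hr, hball⟩ := Metric.nhds_basis_closedBall.eventually_iff.1 hev
  have hrect : ∀ z ∈ Metric.closedBall z₀ r, z ∈ rect T := fun z hz =>
    ⟨Ioo_subset_Icc_self (hball hz).1.1, Ioo_subset_Icc_self (hball hz).1.2⟩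
  obtain ⟨ε, hε, hε1, hclose⟩ : ∃ ε > 0, ε ≤ r ∧ ∀ z ∈ rect T, |U z - V ε z| < κ * r / 2 := by
    have h1 := Metric.tendstoUniformlyOn_iff.1 H.lim (κ * r / 2) (by positivity)
    obtain ⟨ε, h2, h3⟩ := (h1.and (Ioc_mem_nhdsGT hr)).exists
    exact ⟨ε, h3.1, h3.2, h2⟩
  have S := H.sol ε hε
  have hP := H.pot ε hε
  let G : ℝ × ℝ → ℝ := fun z => V ε z - (Dt U z₀ * (z.1 - z₀.1) + Dx U z₀ * (z.2 - z₀.2))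
    - 4 * κ / r * ((z.1 - z₀.1) ^ 2 + (z.2 - z₀.2) ^ 2)
  have hL : ∀ z, fderiv ℝ U z₀ (z - z₀) = Dt U z₀ * (z.1 - z₀.1) + Dx U z₀ * (z.2 - z₀.2) := by
    intro z
    rw [fderiv_eq_Dt_Dx]
    simp [mul_comm]
  have hz₀B : z₀ ∈ Metric.closedBall z₀ r := Metric.mem_closedBall_self hr.le
  have hGc : ContinuousOn G (Metric.closedBall z₀ r) := by
    have := hP.continuousOn.mono hrect
    fun_prop
  obtain ⟨z, hzB, hzmax⟩ := (isCompact_closedBall z₀ r).exists_isMaxOn ⟨z₀, hz₀B⟩ hGc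
  have hGz := hzmax hz₀B
  have hzint : z ∈ Metric.ball z₀ r := by
    by_contra hcon
    have hnorm : ‖z - z₀‖ = r := by
      rw [← dist_eq_norm]
      exact le_antisymm hzB (not_lt.1 hcon)
    have hq : r ^ 2 ≤ (z.1 - z₀.1) ^ 2 + (z.2 - z₀.2) ^ 2 := by
      rw [← hnorm, Prod.norm_def]
      rcases max_choice ‖(z - z₀).1‖ ‖(z - z₀).2‖ with h | h <;> rw [h] <;>
        simp only [Prod.fst_sub, Prod.snd_sub, Real.norm_eq_abs, sq_abs] <;> nlinarith
    have hq' : 4 * κ * r ≤ 4 * κ / r * ((z.1 - z₀.1) ^ 2 + (z.2 - z₀.2) ^ 2) := by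
      calc 4 * κ * r = 4 * κ / r * r ^ 2 := by field_simp
        _ ≤ _ := by gcongr
    have h1 := (hball hzB).2
    rw [hL, hnorm] at h1
    have h2 := abs_le.1 h1
    have h3 := abs_lt.1 (hclose z (hrect z hzB))
    have h4 := abs_lt.1 (hclose z₀ (hrect z₀ hz₀B))
    simp only [G, mem_ofPred_eq, sub_self, mul_zero, add_zero, sub_zero, ne_eq, OfNat.ofNat_ne_zero,
      not_false_eq_true, zero_pow] at hGz
    have h5 : 0 < κ * r := by positivity
    linarith [h2.2, h3.1, h4.2]
  obtain ⟨t, x⟩ := z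
  have hnear : Metric.closedBall z₀ r ∈ 𝓝 (t, x) :=
    mem_of_superset (Metric.isOpen_ball.mem_nhds hzint) Metric.ball_subset_closedBall
  have hmax : IsLocalMax G (t, x) := hzmax.isLocalMax hnear
  have hin : ∀ z ∈ Metric.closedBall z₀ r, z ∈ Ioo (0:ℝ) T ×ˢ Ioo (0:ℝ) 1 := fun z hz =>
    (hball hz).1
  have htz : |t - z₀.1| ≤ r := (norm_fst_le ((t, x) - z₀)).trans
    (by rw [← dist_eq_norm]; exact hzB)
  have hxz : |x - z₀.2| ≤ r := (norm_snd_le ((t, x) - z₀)).trans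
    (by rw [← dist_eq_norm]; exact hzB)
  have hscale : ∀ y : ℝ, |y| ≤ r → |8 * κ / r * y| ≤ 8 * κ := by
    intro y hy
    rw [abs_mul, abs_of_pos (by positivity : 0 < 8 * κ / r)]
    calc 8 * κ / r * |y| ≤ 8 * κ / r * r := by gcongr
      _ = 8 * κ := by field_simp
  have hlin : ∀ c y₀ y : ℝ, HasDerivAt (fun y => c * (y - y₀)) c y := fun c y₀ y =>
    (((hasDerivAt_id y).sub_const y₀).const_mul c).congr_deriv (by simp)
  have hquad : ∀ y₀ e y : ℝ, HasDerivAt (fun y => 4 * κ / r * ((y - y₀) ^ 2 + e))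
      (8 * κ / r * (y - y₀)) y := fun y₀ e y =>
    (((((hasDerivAt_id y).sub_const y₀).pow 2).add_const e).const_mul (4 * κ / r)).congr_deriv
      (by simp only [id]; push_cast; ring)
  have ht1 : flux ε p (u ε) (t, x) - Dt U z₀ - 8 * κ / r * (t - z₀.1) = 0 := by
    have hm : IsLocalMax (fun s => G (s, x)) t :=
      hmax.comp_continuous (g := fun s => (s, x)) (b := t) (by fun_prop)
    refine hm.hasDerivAt_eq_zero ?_
    have h1 : HasDerivAt (fun s => V ε (s, x)) (flux ε p (u ε) (t, x)) t :=
      (hP.hasDerivWithinAt_left (hrect _ hzB)).hasDerivAt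
        (Icc_mem_nhds (hin _ hzB).1.1 (hin _ hzB).1.2)
    exact (h1.sub ((hlin (Dt U z₀) z₀.1 t).add_const (Dx U z₀ * (x - z₀.2)))).sub
      (hquad z₀.1 ((x - z₀.2) ^ 2) t)
  have hx1 : u ε (t, x) - Dx U z₀ - 8 * κ / r * (x - z₀.2) = 0 ∧ Dx (u ε) (t, x) - 8 * κ / r ≤ 0 := by
    have hm : IsLocalMax (fun y => G (t, y)) x :=
      hmax.comp_continuous (g := fun y => (t, y)) (b := x) (by fun_prop)
    refine interior_max_conditions (g₁ := fun y => u ε (t, y) - Dx U z₀ - 8 * κ / r * (y - z₀.2))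
      hm ?_ ?_
    · filter_upwards [Ioo_mem_nhds (hin _ hzB).2.1 (hin _ hzB).2.2] with y hy
      have h1 : HasDerivAt (fun s => V ε (t, s)) (u ε (t, y)) y :=
        (hP.hasDerivWithinAt_right (mem_rect.2 ⟨(hrect _ hzB).1, Ioo_subset_Icc_self hy⟩)).hasDerivAt
          (Icc_mem_nhds hy.1 hy.2)
      have h2 := hquad z₀.2 ((t - z₀.1) ^ 2) y
      simp only [add_comm _ ((t - z₀.1) ^ 2)] at h2
      exact (h1.sub ((hlin (Dx U z₀) z₀.2 y).const_add (Dt U z₀ * (t - z₀.1)))).sub h2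
    · exact ((hasDerivAt_Dx (S.smooth.differentiable (by simp) (t, x))).sub_const _).sub
        (hlin _ _ _)
  refine ⟨ε, hε, (t, x), hrect _ hzB, ?_, ?_, ?_⟩
  · rw [show flux ε p (u ε) (t, x) - Dt U z₀ = 8 * κ / r * (t - z₀.1) by linarith]
    exact hscale _ htz
  · rw [show u ε (t, x) - Dx U z₀ = 8 * κ / r * (x - z₀.2) by linarith [hx1.1]]
    exact hscale _ hxz
  · calc ε * Dx (u ε) (t, x) ≤ ε * (8 * κ / r) := by gcongr; linarith [hx1.2]
      _ ≤ r * (8 * κ / r) := by gcongr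
      _ = 8 * κ := by field_simp

lemma Dx_mem (H : IsViscousFamily T p α β γ δ M K v0 u V U) {z₀ : ℝ × ℝ}
    (hz₀ : z₀ ∈ Ioo (0:ℝ) T ×ˢ Ioo (0:ℝ) 1) (hd : DifferentiableAt ℝ U z₀) :
    Dx U z₀ ∈ Icc (0:ℝ) 1 := by
  constructor <;> refine le_of_forall_pos_le_add fun κ hκ => ?_ <;>
  · obtain ⟨ε, hε, z, hz, -, h2, -⟩ := H.exists_touching hz₀ hd (κ := κ / 8) (by positivity)
    have h := (H.sol ε hε).mem z hz
    have h3 := abs_le.1 h2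
    linarith [h.1, h.2, h3.1, h3.2]

/-- The limit potential is a subsolution of the Hamilton-Jacobi equation. -/
lemma Dt_le (H : IsViscousFamily T p α β γ δ M K v0 u V U) (hp : 0 < p) {z₀ : ℝ × ℝ}
    (hz₀ : z₀ ∈ Ioo (0:ℝ) T ×ˢ Ioo (0:ℝ) 1) (hd : DifferentiableAt ℝ U z₀) :
    Dt U z₀ ≤ - (p * J (Dx U z₀)) := by
  refine le_of_forall_pos_le_add fun κ hκ => ?_
  obtain ⟨ε, hε, z, hz, h1, h2, h3⟩ := H.exists_touching hz₀ hd
    (κ := κ / (8 * (2 + p))) (by positivity)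
  rw [show 8 * (κ / (8 * (2 + p))) = κ / (2 + p) by field_simp] at h1 h2 h3
  have hu := (H.sol ε hε).mem z hz
  have hb := H.Dx_mem hz₀ hd
  have hJ : |J (u ε z) - J (Dx U z₀)| ≤ κ / (2 + p) := by
    rw [show J (u ε z) - J (Dx U z₀) = (u ε z - Dx U z₀) * (1 - u ε z - Dx U z₀) by unfold J; ring,
      abs_mul]
    calc |u ε z - Dx U z₀| * |1 - u ε z - Dx U z₀| ≤ κ / (2 + p) * 1 := by
          gcongr
          rw [abs_le]; constructor <;> linarith [hu.1, hu.2, hb.1, hb.2]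
      _ = _ := mul_one _
  have h4 := (abs_le.1 h1).1
  have h5 := (abs_le.1 hJ).1
  unfold flux at h4
  have h6 : (2 + p) * (κ / (2 + p)) = κ := by field_simp
  nlinarith

end IsViscousFamily

/-! ### Integrals of the derivatives of a Lipschitz function -/

lemma measurable_Dt (U : ℝ × ℝ → ℝ) : Measurable (Dt U) := measurable_fderiv_apply_const ℝ U _

lemma measurable_Dx (U : ℝ × ℝ → ℝ) : Measurable (Dx U) := measurable_fderiv_apply_const ℝ U _

/-- A measurable function bounded on a compact rectangle is integrable there. -/
lemma integrableOn_Icc_prod {f : ℝ × ℝ → ℝ} (hf : Measurable f) {C a b c d : ℝ}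
    (hC : ∀ z ∈ Icc a b ×ˢ Icc c d, |f z| ≤ C) : IntegrableOn f (Icc a b ×ˢ Icc c d) :=
  Measure.integrableOn_of_bounded (isCompact_Icc.prod isCompact_Icc).measure_lt_top.ne
    hf.aestronglyMeasurable
    ((ae_restrict_iff' (measurableSet_Icc.prod measurableSet_Icc)).2 (Eventually.of_forall hC))

lemma LipschitzWith.abs_Dt_le {U : ℝ × ℝ → ℝ} {K : ℝ≥0} (hU : LipschitzWith K U) (z : ℝ × ℝ) :
    |Dt U z| ≤ K := by
  have := (fderiv ℝ U z).le_of_opNorm_le (norm_fderiv_le_of_lipschitz ℝ hU) (1, 0)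
  simpa [Prod.norm_def, Dt, Dx] using this

lemma LipschitzWith.abs_Dx_le {U : ℝ × ℝ → ℝ} {K : ℝ≥0} (hU : LipschitzWith K U) (z : ℝ × ℝ) :
    |Dx U z| ≤ K := by
  have := (fderiv ℝ U z).le_of_opNorm_le (norm_fderiv_le_of_lipschitz ℝ hU) (0, 1)
  simpa [Prod.norm_def, Dt, Dx] using this

lemma LipschitzWith.integral_Dx {U : ℝ × ℝ → ℝ} {K : ℝ≥0} (hU : LipschitzWith K U) {a b c d : ℝ}
    (hab : a ≤ b) (hcd : c ≤ d) :
    ∫ z in Icc a b ×ˢ Icc c d, Dx U z = ∫ t in a..b, (U (t, d) - U (t, c)) := by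
  have hae : ∀ᵐ z ∂(volume : Measure (ℝ × ℝ)), DifferentiableAt ℝ U z := hU.ae_differentiableAt
  have hinteg := integrableOn_Icc_prod (measurable_Dx U) (a := a) (b := b) (c := c) (d := d)
    (fun z _ => hU.abs_Dx_le z)
  rw [Measure.volume_eq_prod] at hae hinteg ⊢
  rw [setIntegral_prod _ hinteg, intervalIntegral.integral_of_le hab, integral_Icc_eq_integral_Ioc]
  refine setIntegral_congr_ae measurableSet_Ioc ?_
  filter_upwards [Measure.ae_ae_of_ae_prod hae] with t ht _
  have hL : LipschitzWith K fun y => U (t, y) := by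
    have := hU.comp (LipschitzWith.prodMk_left (β := ℝ) t)
    rwa [mul_one] at this
  rw [← (hL.lipschitzOnWith (s := uIcc c d)).absolutelyContinuousOnInterval.integral_deriv_eq_sub,
    intervalIntegral.integral_of_le hcd, integral_Icc_eq_integral_Ioc]
  refine setIntegral_congr_ae measurableSet_Ioc ?_
  filter_upwards [ht] with y hy _ using (hasDerivAt_Dx hy).deriv.symm

lemma LipschitzWith.integral_Dt {U : ℝ × ℝ → ℝ} {K : ℝ≥0} (hU : LipschitzWith K U) {a b c d : ℝ}
    (hab : a ≤ b) (hcd : c ≤ d) :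
    ∫ z in Icc a b ×ˢ Icc c d, Dt U z = ∫ x in c..d, (U (b, x) - U (a, x)) := by
  have hae : ∀ᵐ z ∂(volume : Measure (ℝ × ℝ)), DifferentiableAt ℝ U z := hU.ae_differentiableAt
  have hinteg : IntegrableOn (fun z => Dt U z.swap) (Icc c d ×ˢ Icc a b) :=
    integrableOn_Icc_prod ((measurable_Dt U).comp measurable_swap)
      (fun z _ => hU.abs_Dt_le z.swap)
  rw [Measure.volume_eq_prod] at hae hinteg ⊢
  rw [← setIntegral_prod_swap, setIntegral_prod _ hinteg, intervalIntegral.integral_of_le hcd,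
    integral_Icc_eq_integral_Ioc]
  refine setIntegral_congr_ae measurableSet_Ioc ?_
  filter_upwards [Measure.ae_ae_of_ae_prod
    (Measure.measurePreserving_swap.quasiMeasurePreserving.ae hae)] with x hx _
  have hL : LipschitzWith K fun s => U (s, x) := by
    have := hU.comp (LipschitzWith.prodMk_right (α := ℝ) x)
    rwa [mul_one] at this
  rw [← (hL.lipschitzOnWith (s := uIcc a b)).absolutelyContinuousOnInterval.integral_deriv_eq_sub,
    intervalIntegral.integral_of_le hab, integral_Icc_eq_integral_Ioc]
  refine setIntegral_congr_ae measurableSet_Ioc ?_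
  filter_upwards [hx] with y hy _ using (hasDerivAt_Dt hy).deriv.symm

lemma IsPotential.integral_right {T : ℝ} {m v V : ℝ × ℝ → ℝ} (hV : IsPotential T m v V)
    (hv : Continuous v) {b d : ℝ} (hb : b ∈ Icc 0 T) (hd : d ∈ Icc (0:ℝ) 1) :
    ∫ z in Icc 0 b ×ˢ Icc 0 d, v z = ∫ t in (0:ℝ)..b, (V (t, d) - V (t, 0)) := by
  rw [Measure.volume_eq_prod, setIntegral_prod _
    (hv.continuousOn.integrableOn_compact (isCompact_Icc.prod isCompact_Icc)),
    intervalIntegral.integral_of_le hb.1, integral_Icc_eq_integral_Ioc]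
  refine setIntegral_congr_fun measurableSet_Ioc fun t ht => ?_
  have ht' : t ∈ Icc 0 T := ⟨ht.1.le, ht.2.trans hb.2⟩
  rw [integral_Icc_eq_integral_Ioc, ← intervalIntegral.integral_of_le hd.1]
  refine intervalIntegral.integral_eq_sub_of_hasDerivAt_of_le hd.1
    (f := fun y => V (t, y)) (fun y hy => ?_) (fun y hy => ?_)
    (Continuous.intervalIntegrable (by fun_prop) _ _)
  · exact ((hV.hasDerivWithinAt_right (mem_rect.2 ⟨ht', hy.1, hy.2.trans hd.2⟩)).mono
      (Icc_subset_Icc_right hd.2)).continuousWithinAt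
  · exact (hV.hasDerivWithinAt_right (mem_rect.2 ⟨ht', hy.1.le, hy.2.le.trans hd.2⟩)).hasDerivAt
      (Icc_mem_nhds hy.1 (hy.2.trans_le hd.2))

lemma IsPotential.integral_left {T : ℝ} {m v V : ℝ × ℝ → ℝ} (hT : 0 ≤ T)
    (hV : IsPotential T m v V) (hm : Continuous m) :
    ∫ z in rect T, m z = ∫ x in (0:ℝ)..1, (V (T, x) - V (0, x)) := by
  have hinteg : IntegrableOn (fun z : ℝ × ℝ => m z.swap) (Icc 0 1 ×ˢ Icc 0 T) :=
    (Continuous.continuousOn (by fun_prop)).integrableOn_compact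
      (isCompact_Icc.prod isCompact_Icc)
  rw [rect]
  rw [Measure.volume_eq_prod] at hinteg ⊢
  rw [← setIntegral_prod_swap, setIntegral_prod _ hinteg,
    intervalIntegral.integral_of_le zero_le_one, integral_Icc_eq_integral_Ioc]
  refine setIntegral_congr_fun measurableSet_Ioc fun x hx => ?_
  have hx' : x ∈ Icc (0:ℝ) 1 := Ioc_subset_Icc_self hx
  simp only [Prod.swap_prod_mk]
  rw [integral_Icc_eq_integral_Ioc, ← intervalIntegral.integral_of_le hT]
  refine intervalIntegral.integral_eq_sub_of_hasDerivAt_of_le hT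
    (f := fun s => V (s, x)) (fun s hs => ?_) (fun s hs => ?_)
    (Continuous.intervalIntegrable (by fun_prop) _ _)
  · exact (hV.hasDerivWithinAt_left (mem_rect.2 ⟨hs, hx'⟩)).continuousWithinAt
  · exact (hV.hasDerivWithinAt_left
      (mem_rect.2 ⟨Ioo_subset_Icc_self hs, hx'⟩)).hasDerivAt (Icc_mem_nhds hs.1 hs.2)

lemma tendsto_intervalIntegral_of_uniform {ι : Type*} {l : Filter ι} {f : ι → ℝ → ℝ} {g : ℝ → ℝ}
    {a b : ℝ} (hab : a ≤ b) (hf : ∀ᶠ i in l, ContinuousOn (f i) (Icc a b))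
    (hg : ContinuousOn g (Icc a b)) (h : TendstoUniformlyOn f g l (Icc a b)) :
    Tendsto (fun i => ∫ t in a..b, f i t) l (𝓝 (∫ t in a..b, g t)) := by
  rw [Metric.tendsto_nhds]
  intro κ hκ
  have h' := Metric.tendstoUniformlyOn_iff.1 h (κ / (2 * (b - a + 1)))
    (by have := sub_nonneg.2 hab; positivity)
  filter_upwards [hf, h'] with i hi h1
  rw [Real.dist_eq, ← intervalIntegral.integral_sub
    (hi.intervalIntegrable_of_Icc hab) (hg.intervalIntegrable_of_Icc hab)]
  have hba := sub_nonneg.2 hab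
  calc |∫ t in a..b, (f i t - g t)| ≤ κ / (2 * (b - a + 1)) * (b - a) :=
        abs_interval_integral_le hab fun t ht => by
          have := h1 t ht
          rw [dist_comm, Real.dist_eq] at this
          exact this.le
    _ ≤ κ / (2 * (b - a + 1)) * (b - a + 1) := by gcongr; linarith
    _ = κ / 2 := by field_simp
    _ < κ := by linarith

namespace IsViscousFamily

variable {T p α β γ δ M : ℝ} {K : ℝ≥0} {v0 : ℝ → ℝ} {u V : ℝ → ℝ × ℝ → ℝ} {U : ℝ × ℝ → ℝ}

lemma tendsto_integral_rect (H : IsViscousFamily T p α β γ δ M K v0 u V U) {b d : ℝ}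
    (hb : b ∈ Icc 0 T) (hd : d ∈ Icc (0:ℝ) 1) :
    Tendsto (fun ε => ∫ z in Icc 0 b ×ˢ Icc 0 d, u ε z) (𝓝[>] 0)
      (𝓝 (∫ z in Icc 0 b ×ˢ Icc 0 d, Dx U z)) := by
  rw [H.lip.integral_Dx hb.1 hd.1]
  have hmem : ∀ x ∈ Icc (0:ℝ) 1, ∀ t ∈ Icc 0 b, (t, x) ∈ rect T := fun x hx t ht =>
    mem_rect.2 ⟨⟨ht.1, ht.2.trans hb.2⟩, hx⟩
  have hun : ∀ x ∈ Icc (0:ℝ) 1, TendstoUniformlyOn (fun ε t => V ε (t, x)) (fun t => U (t, x))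
      (𝓝[>] 0) (Icc 0 b) := fun x hx => (H.lim.comp (fun t => (t, x))).mono (hmem x hx)
  have hcont : ∀ ε > 0, ∀ x ∈ Icc (0:ℝ) 1, ContinuousOn (fun t => V ε (t, x)) (Icc 0 b) :=
    fun ε hε x hx => (H.pot ε hε).continuousOn.comp (by fun_prop) (hmem x hx)
  have h0 : (0:ℝ) ∈ Icc (0:ℝ) 1 := by simp
  have hUc := H.lip.continuous
  refine (tendsto_intervalIntegral_of_uniform hb.1 ?_ ?_ ((hun d hd).sub (hun 0 h0))).congr' ?_
  · filter_upwards [self_mem_nhdsWithin] with ε hε using (hcont ε hε d hd).sub (hcont ε hε 0 h0)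
  · exact Continuous.continuousOn (by fun_prop)
  · filter_upwards [self_mem_nhdsWithin] with ε hε
    exact ((H.pot ε hε).integral_right (H.sol ε hε).smooth.continuous hb hd).symm

lemma tendsto_integral_flux (H : IsViscousFamily T p α β γ δ M K v0 u V U) (hT : 0 ≤ T) :
    Tendsto (fun ε => ∫ z in rect T, flux ε p (u ε) z) (𝓝[>] 0) (𝓝 (∫ z in rect T, Dt U z)) := by
  rw [show ∫ z in rect T, Dt U z = _ from H.lip.integral_Dt hT zero_le_one]
  have hmem : ∀ t ∈ Icc 0 T, ∀ x ∈ Icc (0:ℝ) 1, (t, x) ∈ rect T := fun t ht x hx =>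
    mem_rect.2 ⟨ht, hx⟩
  have hun : ∀ t ∈ Icc 0 T, TendstoUniformlyOn (fun ε x => V ε (t, x)) (fun x => U (t, x))
      (𝓝[>] 0) (Icc 0 1) := fun t ht => (H.lim.comp (fun x => (t, x))).mono (hmem t ht)
  have hcont : ∀ ε > 0, ∀ t ∈ Icc 0 T, ContinuousOn (fun x => V ε (t, x)) (Icc 0 1) :=
    fun ε hε t ht => (H.pot ε hε).continuousOn.comp (by fun_prop) (hmem t ht)
  have h0 := left_mem_Icc.2 hT
  have h1 := right_mem_Icc.2 hT
  have hUc := H.lip.continuous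
  refine (tendsto_intervalIntegral_of_uniform zero_le_one ?_ ?_ ((hun T h1).sub (hun 0 h0))).congr'
    ?_
  · filter_upwards [self_mem_nhdsWithin] with ε hε using (hcont ε hε T h1).sub (hcont ε hε 0 h0)
  · exact Continuous.continuousOn (by fun_prop)
  · filter_upwards [self_mem_nhdsWithin] with ε hε
    exact ((H.pot ε hε).integral_left hT (contDiff_flux (H.sol ε hε).smooth).continuous).symm

end IsViscousFamily

/-! ### Weak convergence -/

lemma tendsto_setIntegral_of_Iic_prod_Iic {ι : Type*} {l : Filter ι} {μ : Measure (ℝ × ℝ)}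
    [IsFiniteMeasure μ] {f : ι → ℝ × ℝ → ℝ} {g : ℝ × ℝ → ℝ}
    (hf : ∀ᶠ i in l, Integrable (f i) μ ∧ ∀ᵐ z ∂μ, |f i z| ≤ 1) (hg : Integrable g μ)
    (huniv : Tendsto (fun i => ∫ z, f i z ∂μ) l (𝓝 (∫ z, g z ∂μ)))
    (hIic : ∀ a c, Tendsto (fun i => ∫ z in Iic a ×ˢ Iic c, f i z ∂μ) l
      (𝓝 (∫ z in Iic a ×ˢ Iic c, g z ∂μ)))
    {A : Set (ℝ × ℝ)} (hA : MeasurableSet A) :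
    Tendsto (fun i => ∫ z in A, f i z ∂μ) l (𝓝 (∫ z in A, g z ∂μ)) := by
  have hgen : MeasurableSpace.generateFrom (range (Iic : ℝ → Set ℝ)) = Real.measurableSpace := by
    rw [← borel_eq_generateFrom_Iic, ← BorelSpace.measurable_eq]
  have hspan : IsCountablySpanning (range (Iic : ℝ → Set ℝ)) :=
    ⟨fun n : ℕ => Iic (n : ℝ), fun n => mem_range_self _, iUnion_eq_univ_iff.2 fun x =>
      (exists_nat_ge x).imp fun n hn => hn⟩
  refine MeasurableSpace.induction_on_inter
    (C := fun A _ => Tendsto (fun i => ∫ z in A, f i z ∂μ) l (𝓝 (∫ z in A, g z ∂μ)))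
    (generateFrom_eq_prod hgen hgen hspan hspan).symm (isPiSystem_Iic.prod isPiSystem_Iic)
    ?_ ?_ ?_ ?_ A hA
  · simpa using tendsto_const_nhds
  · rintro _ ⟨_, ⟨a, rfl⟩, _, ⟨c, rfl⟩, rfl⟩
    exact hIic a c
  · intro t ht h
    rw [setIntegral_compl ht hg]
    refine (huniv.sub h).congr' ?_
    filter_upwards [hf] with i hi using (setIntegral_compl ht hi.1).symm
  · intro s hd hs h
    rw [integral_iUnion hs hd hg.integrableOn]
    refine (tendsto_tsum_of_dominated_convergence (bound := fun k => μ.real (s k)) ?_ h ?_).congr' ?_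
    · exact summable_measure_toReal hs hd
    · filter_upwards [hf] with i hi k
      have := norm_setIntegral_le_of_norm_le_const_ae (μ := μ) (s := s k) (f := f i) (C := 1)
        (measure_lt_top μ _) (ae_restrict_of_ae hi.2)
      simpa using this
    · filter_upwards [hf] with i hi using (integral_iUnion hs hd hi.1.integrableOn).symm

lemma abs_integral_mul_sub_le {X : Type*} [MeasurableSpace X] {μ : Measure X} {f h k : X → ℝ}
    (hf : AEStronglyMeasurable f μ) (hb : ∀ᵐ z ∂μ, |f z| ≤ 1) (hh : Integrable h μ)
    (hk : Integrable k μ) :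
    |(∫ z, f z * h z ∂μ) - ∫ z, f z * k z ∂μ| ≤ ∫ z, |h z - k z| ∂μ := by
  rw [← MeasureTheory.integral_sub (hh.bdd_mul hf hb) (hk.bdd_mul hf hb)]
  refine MeasureTheory.abs_integral_le_integral_abs.trans (integral_mono_ae ?_ (hh.sub hk).abs ?_)
  · exact ((hh.bdd_mul hf hb).sub (hk.bdd_mul hf hb)).abs
  · filter_upwards [hb] with z hz
    rw [← mul_sub, abs_mul]
    exact mul_le_of_le_one_left (abs_nonneg _) hz

/-- Convergence of integrals over measurable sets upgrades to weak-⋆ convergence. -/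
lemma tendsto_integral_mul_of_setIntegral {X ι : Type*} [MeasurableSpace X] {l : Filter ι}
    {μ : Measure X} [IsFiniteMeasure μ] {f : ι → X → ℝ} {g : X → ℝ}
    (hf : ∀ᶠ i in l, Integrable (f i) μ ∧ ∀ᵐ z ∂μ, |f i z| ≤ 1) (hg : Integrable g μ)
    (hgb : ∀ᵐ z ∂μ, |g z| ≤ 1)
    (hset : ∀ A, MeasurableSet A → Tendsto (fun i => ∫ z in A, f i z ∂μ) l (𝓝 (∫ z in A, g z ∂μ)))
    {h : X → ℝ} (hh : Integrable h μ) :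
    Tendsto (fun i => ∫ z, f i z * h z ∂μ) l (𝓝 (∫ z, g z * h z ∂μ)) := by
  have hfm : ∀ {k : X → ℝ}, Integrable k μ → ∀ᶠ i in l, Integrable (fun z => f i z * k z) μ :=
    fun hk => hf.mono fun i hi => hk.bdd_mul hi.1.1 hi.2
  have hgm : ∀ {k : X → ℝ}, Integrable k μ → Integrable (fun z => g z * k z) μ :=
    fun hk => hk.bdd_mul hg.1 hgb
  refine Integrable.induction
    (fun h => Tendsto (fun i => ∫ z, f i z * h z ∂μ) l (𝓝 (∫ z, g z * h z ∂μ))) ?_ ?_ ?_ ?_ hh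
  · intro c s hs _
    have key : ∀ k : X → ℝ, ∫ z, k z * s.indicator (fun _ => c) z ∂μ = (∫ z in s, k z ∂μ) * c := by
      intro k
      rw [← MeasureTheory.integral_mul_const, ← MeasureTheory.integral_indicator hs]
      congr 1
      ext z
      by_cases hz : z ∈ s <;> simp [hz]
    simp only [key]
    exact (hset s hs).mul_const c
  · intro h k _ hh hk h1 h2
    simp only [Pi.add_apply, mul_add]
    rw [MeasureTheory.integral_add (hgm hh) (hgm hk)]
    refine (h1.add h2).congr' ?_
    filter_upwards [hfm hh, hfm hk] with i a b using (MeasureTheory.integral_add a b).symm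
  · rw [← isSeqClosed_iff_isClosed]
    intro k h hk hkh
    simp only [mem_ofPred_eq] at hk ⊢
    rw [Metric.tendsto_nhds]
    intro κ hκ
    obtain ⟨n, hn⟩ := (Metric.tendsto_nhds.1 hkh (κ / 3) (by positivity)).exists
    have hn' : ∫ z, |h z - k n z| ∂μ < κ / 3 := by
      rw [dist_comm, L1.dist_eq_integral_dist] at hn
      exact hn
    have hhi := L1.integrable_coeFn h
    have hki := L1.integrable_coeFn (k n)
    filter_upwards [hf, Metric.tendsto_nhds.1 (hk n) (κ / 3) (by positivity)] with i hi h1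
    have a1 := abs_le.1 (abs_integral_mul_sub_le hi.1.1 hi.2 hhi hki)
    have a2 := abs_le.1 (abs_integral_mul_sub_le hg.1 hgb hhi hki)
    rw [Real.dist_eq, abs_lt] at h1 ⊢
    constructor <;> linarith [a1.1, a1.2, a2.1, a2.2, h1.1, h1.2]
  · intro h k hhk _ hmem_lim
    have key : ∀ f : X → ℝ, ∫ z, f z * h z ∂μ = ∫ z, f z * k z ∂μ := fun f =>
      integral_congr_ae (by filter_upwards [hhk] with z hz; rw [hz])
    simpa only [key] using hmem_lim

/-- The limit density: the clamped space derivative of the limit potential. -/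
noncomputable def limitDensity (U : ℝ × ℝ → ℝ) (z : ℝ × ℝ) : ℝ := max 0 (min 1 (Dx U z))

lemma limitDensity_mem (U : ℝ × ℝ → ℝ) (z : ℝ × ℝ) : limitDensity U z ∈ Icc (0:ℝ) 1 :=
  ⟨le_max_left _ _, max_le zero_le_one (min_le_left _ _)⟩

lemma measurable_limitDensity (U : ℝ × ℝ → ℝ) : Measurable (limitDensity U) :=
  measurable_const.max (measurable_const.min (measurable_Dx U))

lemma ae_rect_mem_interior (T : ℝ) :
    ∀ᵐ z ∂(volume.restrict (rect T)), z ∈ Ioo (0:ℝ) T ×ˢ Ioo (0:ℝ) 1 := by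
  rw [rect, Measure.volume_eq_prod, ← Measure.prod_restrict,
    restrict_Ioo_eq_restrict_Icc.symm, restrict_Ioo_eq_restrict_Icc.symm, Measure.prod_restrict]
  exact ae_restrict_mem (measurableSet_Ioo.prod measurableSet_Ioo)

lemma integrable_rect_of_bounded {f : ℝ × ℝ → ℝ} (hf : Measurable f) {T C : ℝ}
    (hC : ∀ z ∈ rect T, |f z| ≤ C) : Integrable f (volume.restrict (rect T)) :=
  integrableOn_Icc_prod hf hC

namespace IsViscousFamily

variable {T p α β γ δ M : ℝ} {K : ℝ≥0} {v0 : ℝ → ℝ} {u V : ℝ → ℝ × ℝ → ℝ} {U : ℝ × ℝ → ℝ}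

lemma ae_differentiable (H : IsViscousFamily T p α β γ δ M K v0 u V U) :
    ∀ᵐ z ∂(volume.restrict (rect T)), DifferentiableAt ℝ U z :=
  ae_restrict_of_ae H.lip.ae_differentiableAt

lemma ae_eq_limitDensity (H : IsViscousFamily T p α β γ δ M K v0 u V U) :
    ∀ᵐ z ∂(volume.restrict (rect T)), Dx U z = limitDensity U z := by
  filter_upwards [ae_rect_mem_interior T, H.ae_differentiable] with z hz hd
  have := H.Dx_mem hz hd
  rw [limitDensity, min_eq_right this.2, max_eq_right this.1]

lemma eventually_bound (H : IsViscousFamily T p α β γ δ M K v0 u V U) :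
    ∀ᶠ ε in 𝓝[>] 0, Integrable (u ε) (volume.restrict (rect T)) ∧
      ∀ᵐ z ∂(volume.restrict (rect T)), |u ε z| ≤ 1 := by
  filter_upwards [self_mem_nhdsWithin] with ε hε
  have hb : ∀ z ∈ rect T, |u ε z| ≤ 1 := fun z hz => by
    have := (H.sol ε hε).mem z hz
    rw [abs_of_nonneg this.1]; exact this.2
  exact ⟨integrable_rect_of_bounded (H.sol ε hε).smooth.continuous.measurable hb,
    (ae_restrict_iff' (measurableSet_rect T)).2 (Eventually.of_forall hb)⟩

lemma tendsto_weakStar (H : IsViscousFamily T p α β γ δ M K v0 u V U) (hT : 0 < T)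
    {g : ℝ × ℝ → ℝ} (hg : IntegrableOn g (rect T)) :
    Tendsto (fun ε => ∫ z in rect T, u ε z * g z) (𝓝[>] 0)
      (𝓝 (∫ z in rect T, limitDensity U z * g z)) := by
  have hwb : ∀ z, |limitDensity U z| ≤ 1 := fun z => by
    rw [abs_of_nonneg (limitDensity_mem U z).1]; exact (limitDensity_mem U z).2
  have hwi : Integrable (limitDensity U) (volume.restrict (rect T)) :=
    integrable_rect_of_bounded (measurable_limitDensity U) fun z _ => hwb z
  have hrect : ∀ b ∈ Icc 0 T, ∀ d ∈ Icc (0:ℝ) 1,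
      Tendsto (fun ε => ∫ z in Icc 0 b ×ˢ Icc 0 d, u ε z) (𝓝[>] 0)
        (𝓝 (∫ z in Icc 0 b ×ˢ Icc 0 d, limitDensity U z)) := by
    intro b hb d hd
    have h := H.tendsto_integral_rect hb hd
    have hsub : Icc 0 b ×ˢ Icc 0 d ⊆ rect T :=
      prod_mono (Icc_subset_Icc_right hb.2) (Icc_subset_Icc_right hd.2)
    rwa [integral_congr_ae (ae_restrict_of_ae_restrict_of_subset hsub H.ae_eq_limitDensity)] at h
  refine tendsto_integral_mul_of_setIntegral H.eventually_bound hwi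
    (Eventually.of_forall hwb) (fun A hA => ?_) hg
  refine tendsto_setIntegral_of_Iic_prod_Iic H.eventually_bound hwi
    (hrect T ⟨hT.le, le_rfl⟩ 1 ⟨zero_le_one, le_rfl⟩) (fun a c => ?_) hA
  rw [Measure.restrict_restrict (measurableSet_Iic.prod measurableSet_Iic)]
  have hset : Iic a ×ˢ Iic c ∩ rect T = Icc 0 (min a T) ×ˢ Icc 0 (min c 1) := by
    ext z
    simp only [rect, mem_inter_iff, mem_prod, mem_Iic, mem_Icc, le_min_iff]
    tauto
  rw [hset]
  by_cases ha : 0 ≤ min a T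
  · by_cases hc : 0 ≤ min c 1
    · exact hrect _ ⟨ha, min_le_right _ _⟩ _ ⟨hc, min_le_right _ _⟩
    · simp [Icc_eq_empty hc]
  · simp [Icc_eq_empty ha]

end IsViscousFamily

/-! ### Strong convergence -/

lemma IsRobinSol.abs_le_one {T p α β γ δ ε : ℝ} {v0 : ℝ → ℝ} {v : ℝ × ℝ → ℝ}
    (S : IsRobinSol T p α β γ δ ε v0 v) {z : ℝ × ℝ} (hz : z ∈ rect T) : |v z| ≤ 1 := by
  rw [abs_of_nonneg (S.mem z hz).1]; exact (S.mem z hz).2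

lemma IsRobinSol.abs_integral_Dx_le {T p α β γ δ ε : ℝ} {v0 : ℝ → ℝ} {v : ℝ × ℝ → ℝ}
    (hT : 0 ≤ T) (S : IsRobinSol T p α β γ δ ε v0 v) : |∫ z in rect T, Dx v z| ≤ 2 * T := by
  have h := integral_rect_divergence (f := fun _ => 0) (g := v) (ft := fun _ => 0) (gx := Dx v)
    hT zero_le_one contDiff_const (S.smooth.of_le (by simp)) (fun t x => hasDerivAt_const _ _)
    (fun t x => hasDerivAt_Dx ((S.smooth.differentiable (by simp)) _))
  simp only [zero_add, intervalIntegral.integral_zero, add_zero, sub_zero] at h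
  have h0 := abs_interval_integral_le (f := fun t => v (t, 0)) (C := 1) hT fun t ht =>
    S.abs_le_one (mem_rect.2 ⟨ht, by simp⟩)
  have h1 := abs_interval_integral_le (f := fun t => v (t, 1)) (C := 1) hT fun t ht =>
    S.abs_le_one (mem_rect.2 ⟨ht, by simp⟩)
  rw [rect, h]
  refine (abs_sub _ _).trans ?_
  linarith

namespace IsViscousFamily

variable {T p α β γ δ M : ℝ} {K : ℝ≥0} {v0 : ℝ → ℝ} {u V : ℝ → ℝ × ℝ → ℝ} {U : ℝ × ℝ → ℝ}

lemma tendsto_integral_visc (H : IsViscousFamily T p α β γ δ M K v0 u V U) (hT : 0 ≤ T) :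
    Tendsto (fun ε => ∫ z in rect T, ε * Dx (u ε) z) (𝓝[>] 0) (𝓝 0) := by
  have hlim : Tendsto (fun ε : ℝ => ε * (2 * T)) (𝓝[>] 0) (𝓝 0) := by
    have : Tendsto (fun ε : ℝ => ε * (2 * T)) (𝓝 0) (𝓝 (0 * (2 * T))) :=
      tendsto_id.mul_const _
    rw [zero_mul] at this
    exact this.mono_left nhdsWithin_le_nhds
  refine squeeze_zero_norm' ?_ hlim
  filter_upwards [self_mem_nhdsWithin] with ε hε
  rw [MeasureTheory.integral_const_mul, Real.norm_eq_abs, abs_mul, abs_of_pos hε]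
  exact mul_le_mul_of_nonneg_left ((H.sol ε hε).abs_integral_Dx_le hT) (le_of_lt hε)

lemma integral_Dt_le (H : IsViscousFamily T p α β γ δ M K v0 u V U) (hp : 0 < p) :
    ∫ z in rect T, Dt U z ≤ - (p * ∫ z in rect T, J (limitDensity U z)) := by
  rw [← MeasureTheory.integral_const_mul, ← MeasureTheory.integral_neg]
  have hJ : Measurable fun z => J (limitDensity U z) :=
    (show Continuous J by unfold J; fun_prop).measurable.comp (measurable_limitDensity U)
  refine integral_mono_ae (integrable_rect_of_bounded (measurable_Dt U)
    fun z _ => H.lip.abs_Dt_le z) ?_ ?_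
  · refine ((integrable_rect_of_bounded hJ (C := 1) fun z _ => ?_).const_mul p).neg
    have := J_mem_Icc (limitDensity_mem U z)
    rw [abs_of_nonneg this.1]; exact this.2
  · filter_upwards [ae_rect_mem_interior T, H.ae_differentiable, H.ae_eq_limitDensity] with z hz hd he
    have := H.Dt_le hp hz hd
    rwa [he] at this

/-- Strong `L²` convergence of the viscous approximations to the limit density. -/
lemma tendsto_integral_sq_sub (H : IsViscousFamily T p α β γ δ M K v0 u V U) (hT : 0 < T)
    (hp : 0 < p) :
    Tendsto (fun ε => ∫ z in rect T, (u ε z - limitDensity U z) ^ 2) (𝓝[>] 0) (𝓝 0) := by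
  set w := limitDensity U with hw
  have hwm := measurable_limitDensity U
  have hwb : ∀ z, |w z| ≤ 1 := fun z => by
    rw [abs_of_nonneg (limitDensity_mem U z).1]; exact (limitDensity_mem U z).2
  have hwi : Integrable w (volume.restrict (rect T)) :=
    integrable_rect_of_bounded hwm fun z _ => hwb z
  have hw2 : Integrable (fun z => w z ^ 2) (volume.restrict (rect T)) :=
    integrable_rect_of_bounded (hwm.pow_const 2) (C := 1) fun z _ => by
      rw [abs_pow]; exact pow_le_one₀ (abs_nonneg _) (hwb z)
  have h1 : Tendsto (fun ε => ∫ z in rect T, u ε z) (𝓝[>] 0) (𝓝 (∫ z in rect T, w z)) := by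
    have := H.tendsto_weakStar hT (g := fun _ => 1) (integrable_const _)
    simpa using this
  have h2 := H.tendsto_weakStar hT hwi
  have h3 := H.tendsto_integral_flux hT.le
  have h4 := H.tendsto_integral_visc hT.le
  have key : ∀ ε > 0, ∫ z in rect T, (u ε z - w z) ^ 2 =
      (∫ z in rect T, u ε z) - p⁻¹ * ((∫ z in rect T, ε * Dx (u ε) z)
        - ∫ z in rect T, flux ε p (u ε) z) - 2 * (∫ z in rect T, u ε z * w z)
        + ∫ z in rect T, w z ^ 2 := by
    intro ε hε
    have S := H.sol ε hε
    have hum := S.smooth.continuous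
    have hui : Integrable (u ε) (volume.restrict (rect T)) :=
      integrable_rect_of_bounded hum.measurable fun z hz => S.abs_le_one hz
    have huw : Integrable (fun z => u ε z * w z) (volume.restrict (rect T)) :=
      integrable_rect_of_bounded (hum.measurable.mul hwm) (C := 1) fun z hz => by
        rw [Pi.mul_apply, abs_mul]; exact mul_le_one₀ (S.abs_le_one hz) (abs_nonneg _) (hwb z)
    have hDi : Integrable (fun z => ε * Dx (u ε) z) (volume.restrict (rect T)) :=
      ((contDiff_Dx S.smooth).continuous.continuousOn.integrableOn_compact
        (isCompact_rect T)).const_mul ε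
    have hfi : Integrable (flux ε p (u ε)) (volume.restrict (rect T)) :=
      (contDiff_flux S.smooth).continuous.continuousOn.integrableOn_compact (isCompact_rect T)
    have hi1 : Integrable (fun z => p⁻¹ * (ε * Dx (u ε) z - flux ε p (u ε) z))
      (volume.restrict (rect T)) := (hDi.sub hfi).const_mul _
    have hi2 : Integrable (fun z => u ε z - p⁻¹ * (ε * Dx (u ε) z - flux ε p (u ε) z))
      (volume.restrict (rect T)) := hui.sub hi1
    have hi3 : Integrable (fun z => u ε z - p⁻¹ * (ε * Dx (u ε) z - flux ε p (u ε) z)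
      - 2 * (u ε z * w z)) (volume.restrict (rect T)) := hi2.sub (huw.const_mul 2)
    rw [← MeasureTheory.integral_sub hDi hfi, ← MeasureTheory.integral_const_mul,
      ← MeasureTheory.integral_sub hui hi1, ← MeasureTheory.integral_const_mul,
      ← MeasureTheory.integral_sub hi2 (huw.const_mul 2), ← MeasureTheory.integral_add hi3 hw2]
    congr 1
    ext z
    simp only [flux, J]
    field_simp
    ring
  have hlim : Tendsto (fun ε => ∫ z in rect T, (u ε z - w z) ^ 2) (𝓝[>] 0)
      (𝓝 ((∫ z in rect T, w z) - p⁻¹ * (0 - ∫ z in rect T, Dt U z)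
        - 2 * (∫ z in rect T, w z * w z) + ∫ z in rect T, w z ^ 2)) := by
    refine Tendsto.congr' ?_ (((h1.sub ((h4.sub h3).const_mul p⁻¹)).sub (h2.const_mul 2)).add_const _)
    filter_upwards [self_mem_nhdsWithin] with ε hε
    exact (key ε hε).symm
  have hnn := ge_of_tendsto' hlim fun ε => integral_nonneg fun z => sq_nonneg (u ε z - w z)
  have hD := H.integral_Dt_le hp
  have hJ : ∫ z in rect T, J (limitDensity U z) = (∫ z in rect T, w z) - ∫ z in rect T, w z ^ 2 := by
    rw [← MeasureTheory.integral_sub hwi hw2]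
    congr 1; ext z; simp only [J, hw]; ring
  have hww : ∫ z in rect T, w z * w z = ∫ z in rect T, w z ^ 2 := by
    congr 1; ext z; ring
  have hle : p⁻¹ * ∫ z in rect T, Dt U z ≤ - ∫ z in rect T, J (limitDensity U z) := by
    rw [inv_mul_le_iff₀ hp]; linarith
  rw [hww] at hlim hnn
  convert hlim using 2
  linarith

lemma integral_visc_sq_le (H : IsViscousFamily T p α β γ δ M K v0 u V U) (hT : 0 ≤ T)
    (hp : 0 < p) (hv0 : ContDiff ℝ (⊤ : ℕ∞) v0) (hv0b : ∀ x ∈ Icc (0:ℝ) 1, v0 x ∈ Icc (0:ℝ) 1)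
    {C : ℝ} (hC : ∀ x ∈ Icc (0:ℝ) 1, |deriv v0 x| ≤ C) {ε : ℝ} (hε : 0 < ε) (hε1 : ε ≤ 1) :
    ∫ z in rect T, (ε * Dx (u ε) z) ^ 2 ≤ ε * ((C * M + 2 * (M + p)) * T) := by
  have h := (H.sol ε hε).energy hp hv0 hv0b hC (H.abs_flux_le ε hε hε1) (t := T) ⟨hT, le_rfl⟩
  have h0 : 0 ≤ ∫ x in (0:ℝ)..1, (u ε (T, x) - v0 x) ^ 2 / 2 :=
    intervalIntegral.integral_nonneg zero_le_one fun x _ => by positivity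
  calc ∫ z in rect T, (ε * Dx (u ε) z) ^ 2
      = ε * ∫ z in Icc (0:ℝ) T ×ˢ Icc (0:ℝ) 1, ε * Dx (u ε) z ^ 2 := by
        rw [← MeasureTheory.integral_const_mul]; congr 1; ext z; ring
    _ ≤ _ := mul_le_mul_of_nonneg_left (by linarith) hε.le

end IsViscousFamily

lemma exists_abs_deriv_le {v0 : ℝ → ℝ} (hv0 : ContDiff ℝ (⊤ : ℕ∞) v0) :
    ∃ C, ∀ x ∈ Icc (0:ℝ) 1, |deriv v0 x| ≤ C :=
  isCompact_Icc.exists_bound_of_continuousOn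
    (hv0.continuous_deriv (by simp)).continuousOn

lemma tendstoInMeasure_zero_of_integral {X : Type*} [MeasurableSpace X] {μ : Measure X}
    {f : ℕ → X → ℝ} (hf : ∀ n, Integrable (f n) μ) (h0 : ∀ n x, 0 ≤ f n x)
    (h : Tendsto (fun n => ∫ x, f n x ∂μ) atTop (𝓝 0)) :
    TendstoInMeasure μ f atTop (fun _ => 0) := by
  refine tendstoInMeasure_of_tendsto_eLpNorm one_ne_zero (fun n => (hf n).aestronglyMeasurable)
    aestronglyMeasurable_const ?_
  have : ∀ n, eLpNorm (f n - fun _ => 0) 1 μ = ENNReal.ofReal (∫ x, f n x ∂μ) := by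
    intro n
    rw [eLpNorm_one_eq_lintegral_enorm,
      ofReal_integral_eq_lintegral_ofReal (hf n) (Eventually.of_forall (h0 n))]
    refine lintegral_congr fun x => ?_
    simp [Real.enorm_of_nonneg (h0 n x)]
  simp only [this]
  simpa using ENNReal.tendsto_ofReal h

namespace IsViscousFamily

variable {T p α β γ δ M : ℝ} {K : ℝ≥0} {v0 : ℝ → ℝ} {u V : ℝ → ℝ × ℝ → ℝ} {U : ℝ × ℝ → ℝ}

/-- Along a sequence of viscosities, the approximations converge almost everywhere and the viscous
part of the flux vanishes almost everywhere. -/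
lemma exists_seq_tendsto_ae (H : IsViscousFamily T p α β γ δ M K v0 u V U) (hT : 0 < T)
    (hp : 0 < p) (hv0 : ContDiff ℝ (⊤ : ℕ∞) v0)
    (hv0b : ∀ x ∈ Icc (0:ℝ) 1, v0 x ∈ Icc (0:ℝ) 1) :
    ∃ e : ℕ → ℝ, (∀ n, 0 < e n ∧ e n ≤ 1) ∧
      ∀ᵐ z ∂(volume.restrict (rect T)),
        Tendsto (fun n => u (e n) z) atTop (𝓝 (limitDensity U z)) ∧
        Tendsto (fun n => e n * Dx (u (e n)) z) atTop (𝓝 0) := by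
  obtain ⟨C, hC⟩ := exists_abs_deriv_le hv0
  set e : ℕ → ℝ := fun n => 1 / ((n:ℝ) + 1) with he
  have hpos : ∀ n, 0 < e n := fun n => by positivity
  have hle : ∀ n, e n ≤ 1 := fun n => by
    simp only [he]
    rw [div_le_one (by positivity)]
    have : (0:ℝ) ≤ n := n.cast_nonneg
    linarith
  have he0 : Tendsto e atTop (𝓝 0) := tendsto_one_div_add_atTop_nhds_zero_nat
  have he0' : Tendsto e atTop (𝓝[>] 0) :=
    tendsto_nhdsWithin_iff.2 ⟨he0, Eventually.of_forall hpos⟩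
  set f : ℕ → ℝ × ℝ → ℝ := fun n z =>
    (u (e n) z - limitDensity U z) ^ 2 + (e n * Dx (u (e n)) z) ^ 2 with hf
  have hi1 : ∀ n, Integrable (fun z => (u (e n) z - limitDensity U z) ^ 2)
      (volume.restrict (rect T)) := fun n => by
    have S := H.sol (e n) (hpos n)
    refine integrable_rect_of_bounded
      ((S.smooth.continuous.measurable.sub (measurable_limitDensity U)).pow_const 2) (C := 1)
      fun z hz => ?_
    have h1 := S.mem z hz
    have h2 := limitDensity_mem U z
    rw [abs_pow, Pi.sub_apply]
    exact pow_le_one₀ (abs_nonneg _) (abs_le.2 ⟨by linarith [h1.1, h2.2], by linarith [h1.2, h2.1]⟩)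
  have hi2 : ∀ n, Integrable (fun z => (e n * Dx (u (e n)) z) ^ 2)
      (volume.restrict (rect T)) := fun n =>
    ((continuous_const.mul (contDiff_Dx (H.sol (e n) (hpos n)).smooth).continuous).pow 2
      ).continuousOn.integrableOn_compact (isCompact_rect T)
  have hlim : Tendsto (fun n => ∫ z in rect T, f n z) atTop (𝓝 0) := by
    have h1 := (H.tendsto_integral_sq_sub hT hp).comp he0'
    have h2 : Tendsto (fun n => ∫ z in rect T, (e n * Dx (u (e n)) z) ^ 2) atTop (𝓝 0) := by
      have h3 := he0.mul_const ((C * M + 2 * (M + p)) * T)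
      rw [zero_mul] at h3
      exact squeeze_zero (fun n => integral_nonneg fun z => sq_nonneg _)
        (fun n => H.integral_visc_sq_le hT.le hp hv0 hv0b hC (hpos n) (hle n)) h3
    have := h1.add h2
    rw [add_zero] at this
    refine this.congr fun n => ?_
    exact (MeasureTheory.integral_add (hi1 n) (hi2 n)).symm
  obtain ⟨ns, -, hns⟩ := (tendstoInMeasure_zero_of_integral (f := f)
    (fun n => (hi1 n).add (hi2 n)) (fun n z => by positivity) hlim).exists_seq_tendsto_ae
  refine ⟨fun n => e (ns n), fun n => ⟨hpos _, hle _⟩, ?_⟩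
  filter_upwards [hns] with z hz
  have habs : ∀ {g : ℕ → ℝ}, Tendsto (fun n => g n ^ 2) atTop (𝓝 0) → Tendsto g atTop (𝓝 0) := by
    intro g hg
    have := (Real.continuous_sqrt.tendsto 0).comp hg
    simp only [Real.sqrt_zero, Function.comp_def, Real.sqrt_sq_eq_abs] at this
    exact (tendsto_zero_iff_abs_tendsto_zero _).2 this
  constructor
  · refine tendsto_sub_nhds_zero_iff.1 (habs (squeeze_zero (fun n => sq_nonneg _) (fun n => ?_) hz))
    simp only [hf]
    nlinarith [sq_nonneg (e (ns n) * Dx (u (e (ns n))) z)]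
  · refine habs (squeeze_zero (fun n => sq_nonneg _) (fun n => ?_) hz)
    simp only [hf]
    nlinarith [sq_nonneg (u (e (ns n)) z - limitDensity U z)]

end IsViscousFamily

/-! ### Almost everywhere limits of viscous solutions -/

/-- A sequence of viscous solutions, with vanishing viscous flux, that converges almost everywhere
to `w`. -/
structure IsViscousLimit (T p α β γ δ M : ℝ) (v0 : ℝ → ℝ) (e : ℕ → ℝ) (v : ℕ → ℝ × ℝ → ℝ)
    (w : ℝ × ℝ → ℝ) : Prop where
  pos : ∀ n, 0 < e n
  sol : ∀ n, IsRobinSol T p α β γ δ (e n) v0 (v n)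
  abs_flux_le : ∀ n, ∀ z ∈ rect T, |flux (e n) p (v n) z| ≤ M
  measurable : Measurable w
  mem : ∀ z, w z ∈ Icc (0:ℝ) 1
  ae_tendsto : ∀ᵐ z ∂(volume.restrict (rect T)), Tendsto (fun n => v n z) atTop (𝓝 (w z)) ∧
    Tendsto (fun n => e n * Dx (v n) z) atTop (𝓝 0)

lemma exists_abs_le_on_unit {f : ℝ → ℝ} (hf : Continuous f) :
    ∃ B, 0 ≤ B ∧ ∀ a ∈ Icc (0:ℝ) 1, |f a| ≤ B := by
  obtain ⟨B, hB⟩ := isCompact_Icc.exists_bound_of_continuousOn (s := Icc (0:ℝ) 1) hf.continuousOn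
  exact ⟨B, (norm_nonneg _).trans (hB 0 (by simp)), hB⟩

lemma ae_rect_sections {T : ℝ} {P : ℝ × ℝ → Prop} (h : ∀ᵐ z ∂(volume.restrict (rect T)), P z) :
    ∀ᵐ t : ℝ, t ∈ Icc 0 T → ∀ᵐ x : ℝ, x ∈ Icc (0:ℝ) 1 → P (t, x) := by
  rw [rect, Measure.volume_eq_prod, ← Measure.prod_restrict] at h
  refine (ae_restrict_iff' measurableSet_Icc).1 ?_
  filter_upwards [Measure.ae_ae_of_ae_prod h] with t ht
  exact (ae_restrict_iff' measurableSet_Icc).1 ht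

lemma ae_rect_sections_swap {T : ℝ} {P : ℝ × ℝ → Prop}
    (h : ∀ᵐ z ∂(volume.restrict (rect T)), P z) :
    ∀ᵐ x : ℝ, x ∈ Icc (0:ℝ) 1 → ∀ᵐ t : ℝ, t ∈ Icc 0 T → P (t, x) := by
  rw [rect, Measure.volume_eq_prod, ← Measure.prod_restrict] at h
  refine (ae_restrict_iff' measurableSet_Icc).1 ?_
  filter_upwards [Measure.ae_ae_of_ae_prod
    (Measure.measurePreserving_swap.quasiMeasurePreserving.ae h)] with x hx
  exact (ae_restrict_iff' measurableSet_Icc).1 hx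

lemma tendsto_intervalIntegral_of_bounded {f : ℕ → ℝ → ℝ} {g : ℝ → ℝ} {a b C : ℝ} (hab : a ≤ b)
    (hf : ∀ n, Continuous (f n)) (hC : ∀ n, ∀ x ∈ Icc a b, |f n x| ≤ C)
    (hlim : ∀ᵐ x : ℝ, x ∈ Icc a b → Tendsto (fun n => f n x) atTop (𝓝 (g x))) :
    Tendsto (fun n => ∫ x in a..b, f n x) atTop (𝓝 (∫ x in a..b, g x)) := by
  have hsub : uIoc a b ⊆ Icc a b := by rw [uIoc_of_le hab]; exact Ioc_subset_Icc_self
  refine intervalIntegral.tendsto_integral_filter_of_dominated_convergence (fun _ => C)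
    (Eventually.of_forall fun n => (hf n).aestronglyMeasurable)
    (Eventually.of_forall fun n => Eventually.of_forall fun x hx => hC n x (hsub hx))
    intervalIntegrable_const ?_
  filter_upwards [hlim] with x hx h
  exact hx (hsub h)

namespace IsViscousLimit

variable {T p α β γ δ M : ℝ} {v0 : ℝ → ℝ} {e : ℕ → ℝ} {v : ℕ → ℝ × ℝ → ℝ} {w : ℝ × ℝ → ℝ}

lemma abs_visc_le (H : IsViscousLimit T p α β γ δ M v0 e v w) (hp : 0 < p) (n : ℕ) {z : ℝ × ℝ}
    (hz : z ∈ rect T) : |e n * Dx (v n) z| ≤ M + p := by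
  have h1 := H.abs_flux_le n z hz
  have h2 := J_mem_Icc ((H.sol n).mem z hz)
  have h3 : e n * Dx (v n) z = flux (e n) p (v n) z + p * J (v n z) := by simp [flux]
  rw [h3]
  refine (abs_add_le _ _).trans (add_le_add h1 ?_)
  rw [abs_of_nonneg (mul_nonneg hp.le h2.1)]
  nlinarith [h2.2]

lemma exists_abs_entropyFlux_le (H : IsViscousLimit T p α β γ δ M v0 e v w) (hp : 0 < p)
    {F Q : ℝ → ℝ} (hFQ : IsLaxPair F Q) :
    ∃ B, ∀ n, ∀ z ∈ rect T, |entropyFlux (e n) p F Q (v n) z| ≤ B := by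
  obtain ⟨B₁, -, h₁⟩ := exists_abs_le_on_unit hFQ.2.1.continuous
  obtain ⟨B₂, h₂0, h₂⟩ := exists_abs_le_on_unit hFQ.continuous_deriv
  refine ⟨p * B₁ + B₂ * (M + p), fun n z hz => ?_⟩
  have hm := (H.sol n).mem z hz
  refine (abs_sub _ _).trans (add_le_add ?_ ?_)
  · rw [abs_mul, abs_of_pos hp]
    exact mul_le_mul_of_nonneg_left (h₁ _ hm) hp.le
  · rw [abs_mul]
    exact mul_le_mul (h₂ _ hm) (H.abs_visc_le hp n hz) (abs_nonneg _) h₂0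

lemma ae_tendsto_entropyFlux (H : IsViscousLimit T p α β γ δ M v0 e v w)
    {F Q : ℝ → ℝ} (hFQ : IsLaxPair F Q) :
    ∀ᵐ z ∂(volume.restrict (rect T)),
      Tendsto (fun n => entropyFlux (e n) p F Q (v n) z) atTop (𝓝 (p * Q (w z))) := by
  filter_upwards [H.ae_tendsto] with z hz
  have h1 := ((hFQ.2.1.continuous.tendsto _).comp hz.1).const_mul p
  have h2 := ((hFQ.continuous_deriv.tendsto _).comp hz.1).mul hz.2
  have := h1.sub h2
  rwa [mul_zero, sub_zero] at this

lemma entropy_nonneg (H : IsViscousLimit T p α β γ δ M v0 e v w) (hT : 0 < T) (hp : 0 < p)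
    {F Q : ℝ → ℝ} (hFQ : IsLaxPair F Q) {ψ : ℝ × ℝ → ℝ} (hψ : ContDiff ℝ 1 ψ)
    (hsupp : tsupport ψ ⊆ Ioo 0 T ×ˢ Ioo (0:ℝ) 1) (hψ0 : ∀ z, 0 ≤ ψ z) :
    0 ≤ ∫ z in rect T, (Dt ψ z * F (w z) + Dx ψ z * (p * Q (w z))) := by
  obtain ⟨B, hB⟩ := H.exists_abs_entropyFlux_le hp hFQ
  obtain ⟨B₁, -, h₁⟩ := exists_abs_le_on_unit hFQ.1.continuous
  have hcD : Continuous (Dt ψ) := (hψ.continuous_fderiv (by simp)).clm_apply continuous_const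
  have hcX : Continuous (Dx ψ) := (hψ.continuous_fderiv (by simp)).clm_apply continuous_const
  obtain ⟨C₁, hC₁⟩ := (isCompact_rect T).exists_bound_of_continuousOn hcD.continuousOn
  obtain ⟨C₂, hC₂⟩ := (isCompact_rect T).exists_bound_of_continuousOn hcX.continuousOn
  have hlim : Tendsto (fun n => ∫ z in rect T,
      (Dt ψ z * F (v n z) + Dx ψ z * entropyFlux (e n) p F Q (v n) z)) atTop
      (𝓝 (∫ z in rect T, (Dt ψ z * F (w z) + Dx ψ z * (p * Q (w z))))) := by
    refine tendsto_integral_of_dominated_convergence (fun _ => C₁ * B₁ + C₂ * B)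
      (fun n => ?_) (integrable_const _) (fun n => ?_) ?_
    · exact ((hcD.mul (hFQ.1.continuous.comp (H.sol n).smooth.continuous)).add
        (hcX.mul ((H.sol n).continuous_entropyFlux hFQ))).aestronglyMeasurable
    · filter_upwards [ae_restrict_mem (measurableSet_rect T)] with z hz
      refine (norm_add_le _ _).trans (add_le_add ?_ ?_)
      · rw [norm_mul]
        exact mul_le_mul (hC₁ z hz) (h₁ _ ((H.sol n).mem z hz)) (norm_nonneg _)
          ((norm_nonneg _).trans (hC₁ z hz))
      · rw [norm_mul]
        exact mul_le_mul (hC₂ z hz) (hB n z hz) (norm_nonneg _)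
          ((norm_nonneg _).trans (hC₂ z hz))
    · filter_upwards [H.ae_tendsto, H.ae_tendsto_entropyFlux hFQ] with z hz hz'
      exact (((hFQ.1.continuous.tendsto _).comp hz.1).const_mul _).add (hz'.const_mul _)
  refine ge_of_tendsto' hlim fun n => ?_
  have hz : ∀ z, z ∉ Ioo 0 T ×ˢ Ioo (0:ℝ) 1 → ψ z = 0 := fun z hz =>
    image_eq_zero_of_notMem_tsupport fun h => hz (hsupp h)
  have h := (H.sol n).entropy_inequality hT (H.pos n) hFQ hψ (fun z _ => hψ0 z) le_rfl
    zero_le_one le_rfl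
  have e1 : ∀ t, ψ (t, 1) = 0 := fun t => hz _ (by simp)
  have e2 : ∀ t, ψ (t, 0) = 0 := fun t => hz _ (by simp)
  have e3 : ∀ x, ψ (T, x) = 0 := fun x => hz _ (by simp)
  have e4 : ∀ x, ψ (0, x) = 0 := fun x => hz _ (by simp)
  simp only [e1, e2, e3, e4, zero_mul, intervalIntegral.integral_zero, sub_zero, add_zero] at h
  exact h

lemma ae_integral_sq_sub_le (H : IsViscousLimit T p α β γ δ M v0 e v w) (hp : 0 < p)
    (hv0 : ContDiff ℝ (⊤ : ℕ∞) v0) (hv0b : ∀ x ∈ Icc (0:ℝ) 1, v0 x ∈ Icc (0:ℝ) 1)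
    {C : ℝ} (hC : ∀ x ∈ Icc (0:ℝ) 1, |deriv v0 x| ≤ C) :
    ∀ᵐ t : ℝ, t ∈ Icc 0 T →
      ∫ x in (0:ℝ)..1, (w (t, x) - v0 x) ^ 2 / 2 ≤ (C * M + 2 * (M + p)) * t := by
  filter_upwards [ae_rect_sections H.ae_tendsto] with t ht htT
  have hlim : Tendsto (fun n => ∫ x in (0:ℝ)..1, (v n (t, x) - v0 x) ^ 2 / 2) atTop
      (𝓝 (∫ x in (0:ℝ)..1, (w (t, x) - v0 x) ^ 2 / 2)) := by
    refine tendsto_intervalIntegral_of_bounded (C := 1) zero_le_one (fun n => ?_)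
      (fun n x hx => ?_) ?_
    · have := (H.sol n).smooth.continuous
      have := hv0.continuous
      fun_prop
    · have h1 := (H.sol n).mem (t, x) (mem_rect.2 ⟨htT, hx⟩)
      have h2 := hv0b x hx
      rw [abs_of_nonneg (by positivity)]
      nlinarith [h1.1, h1.2, h2.1, h2.2]
    · filter_upwards [ht htT] with x hx hx1
      exact (((hx hx1).1.sub_const _).pow 2).div_const _
  refine le_of_tendsto' hlim fun n => ?_
  have h := (H.sol n).energy hp hv0 hv0b hC (H.abs_flux_le n) htT
  have h0 : 0 ≤ ∫ z in Icc (0:ℝ) t ×ˢ Icc (0:ℝ) 1, e n * Dx (v n) z ^ 2 :=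
    integral_nonneg fun z => mul_nonneg (H.pos n).le (sq_nonneg _)
  linarith

lemma tendsto_initial (H : IsViscousLimit T p α β γ δ M v0 e v w) (hT : 0 < T) (hp : 0 < p)
    (hv0 : ContDiff ℝ (⊤ : ℕ∞) v0) (hv0b : ∀ x ∈ Icc (0:ℝ) 1, v0 x ∈ Icc (0:ℝ) 1) :
    Tendsto (fun t => ∫ x in (0:ℝ)..1, |w (t, x) - v0 x|) (𝓝[>] 0 ⊓ ae volume) (𝓝 0) := by
  obtain ⟨C, hC⟩ := exists_abs_deriv_le hv0
  set D := C * M + 2 * (M + p) with hD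
  have hlim : Tendsto (fun t : ℝ => √t * (1 / 2 + D)) (𝓝[>] 0 ⊓ ae volume) (𝓝 0) := by
    have : Tendsto (fun t : ℝ => √t * (1 / 2 + D)) (𝓝 0) (𝓝 (√0 * (1 / 2 + D))) :=
      (Real.continuous_sqrt.tendsto 0).mul_const _
    rw [Real.sqrt_zero, zero_mul] at this
    exact this.mono_left (inf_le_left.trans nhdsWithin_le_nhds)
  refine squeeze_zero' (Eventually.of_forall fun t =>
    intervalIntegral.integral_nonneg zero_le_one fun x _ => abs_nonneg _) ?_ hlim
  have hev : ∀ᶠ t in 𝓝[>] (0:ℝ) ⊓ ae volume, t ∈ Ioo 0 T :=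
    Eventually.filter_mono inf_le_left (Ioo_mem_nhdsGT hT)
  filter_upwards [hev, (H.ae_integral_sq_sub_le hp hv0 hv0b hC).filter_mono inf_le_right]
    with t ht h
  have hs := Real.sqrt_pos.2 ht.1
  have hsq := Real.sq_sqrt ht.1.le
  have hm : Measurable fun x => w (t, x) - v0 x :=
    (H.measurable.comp measurable_prodMk_left).sub hv0.continuous.measurable
  have hb : ∀ x ∈ Ioc (0:ℝ) 1, |w (t, x) - v0 x| ≤ 1 := fun x hx => by
    have h1 := H.mem (t, x)
    have h2 := hv0b x (Ioc_subset_Icc_self hx)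
    exact abs_le.2 ⟨by linarith [h1.1, h2.2], by linarith [h1.2, h2.1]⟩
  have hi1 : IntervalIntegrable (fun x => |w (t, x) - v0 x|) volume 0 1 := by
    rw [intervalIntegrable_iff_integrableOn_Ioc_of_le zero_le_one]
    refine Measure.integrableOn_of_bounded (M := 1) (by simp) hm.abs.aestronglyMeasurable ?_
    filter_upwards [ae_restrict_mem measurableSet_Ioc] with x hx
    rw [Real.norm_eq_abs, abs_abs]; exact hb x hx
  have hi2 : IntervalIntegrable (fun x => (w (t, x) - v0 x) ^ 2 / 2) volume 0 1 := by
    rw [intervalIntegrable_iff_integrableOn_Ioc_of_le zero_le_one]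
    refine Measure.integrableOn_of_bounded (M := 1) (by simp)
      ((hm.pow_const 2).div_const 2).aestronglyMeasurable ?_
    filter_upwards [ae_restrict_mem measurableSet_Ioc] with x hx
    have := hb x hx
    rw [Real.norm_eq_abs, abs_of_nonneg (by positivity), ← sq_abs]
    nlinarith [abs_nonneg (w (t, x) - v0 x)]
  calc ∫ x in (0:ℝ)..1, |w (t, x) - v0 x|
      ≤ ∫ x in (0:ℝ)..1, (√t / 2 + (√t)⁻¹ * ((w (t, x) - v0 x) ^ 2 / 2)) := by
        refine intervalIntegral.integral_mono_on zero_le_one hi1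
          (intervalIntegrable_const.add (hi2.const_mul _)) fun x _ => ?_
        rw [← sq_abs]
        field_simp
        nlinarith [sq_nonneg (√t - |w (t, x) - v0 x|)]
    _ = √t / 2 + (√t)⁻¹ * ∫ x in (0:ℝ)..1, (w (t, x) - v0 x) ^ 2 / 2 := by
        rw [intervalIntegral.integral_add intervalIntegrable_const (hi2.const_mul _),
          intervalIntegral.integral_const_mul]
        simp
    _ ≤ √t / 2 + (√t)⁻¹ * (D * t) := by
        gcongr
        exact h ⟨ht.1.le, ht.2.le⟩
    _ = √t * (1 / 2 + D) := by
        field_simp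
        rw [hsq]; ring

end IsViscousLimit

/-! ### Boundary entropy fluxes -/

lemma hasDerivAt_lax_defect {F Q f : ℝ → ℝ} (hFQ : IsLaxPair F Q) {p κ a : ℝ}
    (ha : a ∈ Icc (0:ℝ) 1) (hf : HasDerivAt f (p * (1 - 2 * a) + κ) a) :
    HasDerivAt (fun a => p * Q a - deriv F a * f a)
      (-(deriv (deriv F) a * f a) - κ * deriv F a) a := by
  have hQ := ((hFQ.2.1.differentiable (by simp)) a).hasDerivAt
  have hF := ((hFQ.contDiff_deriv.differentiable (by simp)) a).hasDerivAt
  rw [hFQ.2.2.1 a ha] at hQ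
  refine ((hQ.const_mul p).sub (hF.mul hf)).congr_deriv ?_
  ring

lemma IsLaxPair.monotoneOn_deriv {F Q : ℝ → ℝ} (hFQ : IsLaxPair F Q) :
    MonotoneOn (deriv F) (Icc 0 1) := by
  refine monotoneOn_of_deriv_nonneg (convex_Icc 0 1) hFQ.continuous_deriv.continuousOn
    (hFQ.contDiff_deriv.differentiable (by simp)).differentiableOn fun x hx => ?_
  exact hFQ.2.2.2 x (interior_subset hx)

/-- The boundary entropy flux has a sign when the boundary flux `f` changes sign at `c`. -/
lemma lax_defect_nonpos {F Q f : ℝ → ℝ} (hFQ : IsLaxPair F Q) {p κ c a : ℝ} (hκ : 0 ≤ κ)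
    (hc : c ∈ Icc (0:ℝ) 1) (hFc : deriv F c = 0) (hQc : Q c = 0)
    (hf : ∀ a, HasDerivAt f (p * (1 - 2 * a) + κ) a)
    (hl : ∀ a ∈ Icc 0 c, f a ≤ 0) (hr : ∀ a ∈ Icc c 1, 0 ≤ f a) (ha : a ∈ Icc (0:ℝ) 1) :
    p * Q a - deriv F a * f a ≤ 0 := by
  set h : ℝ → ℝ := fun a => p * Q a - deriv F a * f a with hh
  have hd : ∀ a ∈ Icc (0:ℝ) 1, HasDerivAt h (-(deriv (deriv F) a * f a) - κ * deriv F a) a :=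
    fun a ha => hasDerivAt_lax_defect hFQ ha (hf a)
  have h0 : h c = 0 := by simp [hh, hFc, hQc]
  have hcont : ContinuousOn h (Icc 0 1) := fun a ha => (hd a ha).continuousAt.continuousWithinAt
  have hmono := hFQ.monotoneOn_deriv
  rcases le_total c a with hca | hca
  · have hsub : Icc c 1 ⊆ Icc (0:ℝ) 1 := Icc_subset_Icc_left hc.1
    have : AntitoneOn h (Icc c 1) := by
      refine antitoneOn_of_deriv_nonpos (convex_Icc c 1) (hcont.mono hsub)
        (fun x hx => (hd x (hsub (interior_subset hx))).differentiableAt.differentiableWithinAt)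
        fun x hx => ?_
      have hx := interior_subset hx
      rw [(hd x (hsub hx)).deriv]
      have h1 := hFQ.2.2.2 x (hsub hx)
      have h2 := hr x hx
      have h3 := hmono hc (hsub hx) hx.1
      rw [hFc] at h3
      nlinarith [mul_nonneg h1 h2, mul_nonneg hκ h3]
    rw [← h0]
    exact this ⟨le_rfl, hc.2⟩ ⟨hca, ha.2⟩ hca
  · have hsub : Icc 0 c ⊆ Icc (0:ℝ) 1 := Icc_subset_Icc_right hc.2
    have : MonotoneOn h (Icc 0 c) := by
      refine monotoneOn_of_deriv_nonneg (convex_Icc 0 c) (hcont.mono hsub)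
        (fun x hx => (hd x (hsub (interior_subset hx))).differentiableAt.differentiableWithinAt)
        fun x hx => ?_
      have hx := interior_subset hx
      rw [(hd x (hsub hx)).deriv]
      have h1 := hFQ.2.2.2 x (hsub hx)
      have h2 := hl x hx
      have h3 := hmono (hsub hx) hc hx.2
      rw [hFc] at h3
      nlinarith [mul_nonneg h1 (neg_nonneg.2 h2), mul_nonneg hκ (neg_nonneg.2 h3)]
    rw [← h0]
    exact this ⟨ha.1, hca⟩ ⟨hc.1, le_rfl⟩ hca

lemma IsRobinSol.entropyFlux_left_nonpos {T p α β γ δ ε vm vp t : ℝ} {v0 : ℝ → ℝ} {v : ℝ × ℝ → ℝ}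
    (S : IsRobinSol T p α β γ δ ε v0 v) (hα : 0 ≤ α) (hγ : 0 ≤ γ)
    (B : IsBoundaryDensity p α β γ δ vm vp) {F Q : ℝ → ℝ} (hFQ : IsLaxPair F Q)
    (hF : deriv F vm = 0) (hQ : Q vm = 0) (ht : t ∈ Icc 0 T) :
    entropyFlux ε p F Q v (t, 0) ≤ 0 := by
  rw [entropyFlux, S.left t ht]
  refine lax_defect_nonpos (f := fun a => p * J a - α + (α + γ) * a) hFQ (add_nonneg hα hγ)
    B.vm_mem hF hQ (fun a => ?_) (fun a ha => B.left_nonpos a ha.2) (fun a ha => B.left_nonneg a ha)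
    (S.mem _ (mem_rect.2 ⟨ht, by simp⟩))
  refine ((((hasDerivAt_J a).const_mul p).sub_const α).add
    ((hasDerivAt_id a).const_mul (α + γ))).congr_deriv ?_
  simp

lemma IsRobinSol.entropyFlux_right_nonneg {T p α β γ δ ε vm vp t : ℝ} {v0 : ℝ → ℝ}
    {v : ℝ × ℝ → ℝ} (S : IsRobinSol T p α β γ δ ε v0 v) (hβ : 0 ≤ β) (hδ : 0 ≤ δ)
    (B : IsBoundaryDensity p α β γ δ vm vp) {F Q : ℝ → ℝ} (hFQ : IsLaxPair F Q)
    (hF : deriv F vp = 0) (hQ : Q vp = 0) (ht : t ∈ Icc 0 T) :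
    0 ≤ entropyFlux ε p F Q v (t, 1) := by
  rw [entropyFlux, S.right t ht]
  have := lax_defect_nonpos (p := -p) (f := fun a => -(p * J a + δ - (β + δ) * a)) hFQ
    (add_nonneg hβ hδ) B.vp_mem hF hQ (fun a => ?_)
    (fun a ha => neg_nonpos.2 (B.right_nonneg a ha))
    (fun a ha => neg_nonneg.2 (B.right_nonpos a ha.1))
    (S.mem (t, 1) (mem_rect.2 ⟨ht, by simp⟩))
  · linarith
  · refine ((((hasDerivAt_J a).const_mul p).add_const δ).sub
      ((hasDerivAt_id a).const_mul (β + δ))).neg.congr_deriv ?_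
    ring

lemma exists_tendsto_of_eventually_mono {ι : Type*} {l : Filter ι} {g : ι → ℝ} {S : Set ι} {B : ℝ}
    (hS : ∀ᶠ x in l, x ∈ S) (hmono : ∀ s ∈ S, ∀ᶠ x in l, g s ≤ g x)
    (hle : ∀ s ∈ S, g s ≤ B) : ∃ L ≤ B, Tendsto g l (𝓝 L) := by
  rcases l.eq_or_neBot with rfl | hl
  · exact ⟨B, le_rfl, tendsto_bot⟩
  have hne : (g '' S).Nonempty := hS.exists.elim fun x hx => ⟨_, mem_image_of_mem g hx⟩
  have hbdd : BddAbove (g '' S) := ⟨B, by rintro _ ⟨s, hs, rfl⟩; exact hle s hs⟩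
  refine ⟨sSup (g '' S), csSup_le hne (by rintro _ ⟨s, hs, rfl⟩; exact hle s hs), ?_⟩
  refine tendsto_order.2 ⟨fun a ha => ?_, fun a ha => ?_⟩
  · obtain ⟨_, ⟨s, hs, rfl⟩, hlt⟩ := exists_lt_of_lt_csSup hne ha
    filter_upwards [hmono s hs] with x hx using hlt.trans_le hx
  · filter_upwards [hS] with x hx using (le_csSup hbdd (mem_image_of_mem g hx)).trans_lt ha

lemma exists_tendsto_of_approx {ι : Type*} {l : Filter ι} {g : ι → ℝ}
    (h : ∀ κ > 0, ∃ g' : ι → ℝ, (∀ x, |g x - g' x| ≤ κ) ∧ ∃ L ≤ (0:ℝ), Tendsto g' l (𝓝 L)) :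
    ∃ L ≤ (0:ℝ), Tendsto g l (𝓝 L) := by
  rcases l.eq_or_neBot with rfl | hl
  · exact ⟨0, le_rfl, tendsto_bot⟩
  have hev : ∀ κ > 0, ∃ L ≤ (0:ℝ), ∀ᶠ x in l, |g x - L| < κ := by
    intro κ hκ
    obtain ⟨g', hg', L, hL, ht⟩ := h (κ / 2) (half_pos hκ)
    refine ⟨L, hL, ?_⟩
    filter_upwards [Metric.tendsto_nhds.1 ht (κ / 2) (half_pos hκ)] with x hx
    rw [Real.dist_eq] at hx
    have := abs_sub_le (g x) (g' x) L
    linarith [hg' x]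
  have hc : Cauchy (map g l) := by
    refine Metric.cauchy_iff.2 ⟨hl.map g, fun κ hκ => ?_⟩
    obtain ⟨L, -, hL⟩ := hev (κ / 2) (half_pos hκ)
    refine ⟨Metric.ball L (κ / 2), ?_, fun x hx y hy => ?_⟩
    · exact mem_map.2 (hL.mono fun x hx => by simpa [Real.dist_eq] using hx)
    · have := dist_triangle_right x y L
      rw [Metric.mem_ball] at hx hy
      linarith
  obtain ⟨L, hL⟩ := cauchy_map_iff_exists_tendsto.1 hc
  refine ⟨L, le_of_forall_pos_le_add fun κ hκ => ?_, hL⟩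
  obtain ⟨L', hL', hev'⟩ := hev κ hκ
  refine le_of_tendsto hL ?_
  filter_upwards [hev'] with x hx
  linarith [(abs_lt.1 hx).2]

namespace IsViscousLimit

variable {T p α β γ δ M : ℝ} {v0 : ℝ → ℝ} {e : ℕ → ℝ} {v : ℕ → ℝ × ℝ → ℝ} {w : ℝ × ℝ → ℝ}

lemma exists_trace_sub_le (H : IsViscousLimit T p α β γ δ M v0 e v w) (hT : 0 < T)
    {F Q : ℝ → ℝ} (hFQ : IsLaxPair F Q) {φ : ℝ → ℝ} (hφ : ContDiff ℝ 1 φ)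
    (hφ0 : ∀ t ∈ Icc 0 T, 0 ≤ φ t) :
    ∃ C, ∀ n, ∀ x₁ x₂, 0 ≤ x₁ → x₁ ≤ x₂ → x₂ ≤ 1 →
      (∫ t in (0:ℝ)..T, φ t * entropyFlux (e n) p F Q (v n) (t, x₂))
        - ∫ t in (0:ℝ)..T, φ t * entropyFlux (e n) p F Q (v n) (t, x₁) ≤ C * (x₂ - x₁) := by
  obtain ⟨B, hB0, hB⟩ := exists_abs_le_on_unit hFQ.1.continuous
  obtain ⟨D, hD⟩ := isCompact_Icc.exists_bound_of_continuousOn (s := Icc 0 T)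
    (hφ.continuous_deriv le_rfl).continuousOn
  have hT0 : (0:ℝ) ∈ Icc 0 T := ⟨le_rfl, hT.le⟩
  have hTT : T ∈ Icc 0 T := ⟨hT.le, le_rfl⟩
  refine ⟨D * B * T + φ T * B + φ 0 * B, fun n x₁ x₂ hx₁ hx hx₂ => ?_⟩
  have hψ : ContDiff ℝ 1 fun z : ℝ × ℝ => φ z.1 := hφ.comp contDiff_fst
  have hDt : ∀ z : ℝ × ℝ, Dt (fun z : ℝ × ℝ => φ z.1) z = deriv φ z.1 := fun z =>
    (hasDerivAt_Dt (t := z.1) (x := z.2) ((hψ.differentiable (by simp)) _)).deriv.symm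
  have hDx : ∀ z : ℝ × ℝ, Dx (fun z : ℝ × ℝ => φ z.1) z = 0 := fun z =>
    (hasDerivAt_Dx (t := z.1) (x := z.2) ((hψ.differentiable (by simp)) _)).unique
      (hasDerivAt_const z.2 (φ z.1))
  have h := (H.sol n).entropy_inequality hT (H.pos n) hFQ hψ
    (fun z hz => hφ0 z.1 (mem_rect.1 hz).1) hx₁ hx hx₂
  simp only [hDt, hDx, zero_mul, add_zero] at h
  have hmem : ∀ t ∈ Icc 0 T, ∀ x ∈ Icc x₁ x₂, |F (v n (t, x))| ≤ B := fun t ht x hx' =>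
    hB _ ((H.sol n).mem _ (mem_rect.2 ⟨ht, hx₁.trans hx'.1, hx'.2.trans hx₂⟩))
  have h1 := abs_integral_rect_le (f := fun z => deriv φ z.1 * F (v n z)) (C := D * B) hT.le hx
    fun z hz => by
      rw [abs_mul]
      exact mul_le_mul (hD _ hz.1) (hmem _ hz.1 _ hz.2) (abs_nonneg _)
        ((norm_nonneg _).trans (hD _ hz.1))
  have h2 : ∀ t ∈ Icc 0 T, |∫ x in x₁..x₂, φ t * F (v n (t, x))| ≤ φ t * B * (x₂ - x₁) :=
    fun t ht => abs_interval_integral_le hx fun x hx' => by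
      rw [abs_mul, abs_of_nonneg (hφ0 t ht)]
      exact mul_le_mul_of_nonneg_left (hmem t ht x hx') (hφ0 t ht)
  have h3 := (abs_le.1 (h2 T hTT)).1
  have h4 := (abs_le.1 (h2 0 hT0)).2
  have h5 := (abs_le.1 h1).2
  linarith

lemma ae_tendsto_trace (H : IsViscousLimit T p α β γ δ M v0 e v w) (hT : 0 < T) (hp : 0 < p)
    {F Q : ℝ → ℝ} (hFQ : IsLaxPair F Q) {φ : ℝ → ℝ} (hφ : Continuous φ) :
    ∀ᵐ x : ℝ, x ∈ Icc (0:ℝ) 1 →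
      Tendsto (fun n => ∫ t in (0:ℝ)..T, φ t * entropyFlux (e n) p F Q (v n) (t, x)) atTop
        (𝓝 (p * ∫ t in (0:ℝ)..T, φ t * Q (w (t, x)))) := by
  obtain ⟨B, hB⟩ := H.exists_abs_entropyFlux_le hp hFQ
  obtain ⟨D, hD⟩ := isCompact_Icc.exists_bound_of_continuousOn (s := Icc 0 T) hφ.continuousOn
  filter_upwards [ae_rect_sections_swap (H.ae_tendsto_entropyFlux hFQ)] with x hx hx1
  rw [← intervalIntegral.integral_const_mul]
  refine tendsto_intervalIntegral_of_bounded (C := D * B) hT.le (fun n => ?_) (fun n t ht => ?_) ?_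
  · have := (H.sol n).continuous_entropyFlux hFQ
    fun_prop
  · rw [abs_mul]
    exact mul_le_mul (hD t ht) (hB n _ (mem_rect.2 ⟨ht, hx1⟩)) (abs_nonneg _)
      ((norm_nonneg _).trans (hD t ht))
  · filter_upwards [hx hx1] with t ht htT
    convert (ht htT).const_mul (φ t) using 2
    ring

lemma exists_traces_of_contDiff (H : IsViscousLimit T p α β γ δ M v0 e v w) (hT : 0 < T)
    (hp : 0 < p) {F Q : ℝ → ℝ} (hFQ : IsLaxPair F Q) {φ : ℝ → ℝ} (hφ : ContDiff ℝ 1 φ)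
    (hφ0 : ∀ t ∈ Icc 0 T, 0 ≤ φ t) :
    ((∀ n, ∀ t ∈ Icc 0 T, entropyFlux (e n) p F Q (v n) (t, 0) ≤ 0) →
      ∃ L ≤ (0:ℝ), Tendsto (fun x => ∫ t in (0:ℝ)..T, φ t * Q (w (t, x)))
        (𝓝[>] 0 ⊓ ae volume) (𝓝 L)) ∧
    ((∀ n, ∀ t ∈ Icc 0 T, 0 ≤ entropyFlux (e n) p F Q (v n) (t, 1)) →
      ∃ L ≤ (0:ℝ), Tendsto (fun x => -∫ t in (0:ℝ)..T, φ t * Q (w (t, x)))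
        (𝓝[<] 1 ⊓ ae volume) (𝓝 L)) := by
  obtain ⟨C, hC⟩ := H.exists_trace_sub_le hT hFQ hφ hφ0
  set I : ℕ → ℝ → ℝ := fun n x => ∫ t in (0:ℝ)..T, φ t * entropyFlux (e n) p F Q (v n) (t, x)
    with hI
  set G : ℝ → ℝ := fun x => ∫ t in (0:ℝ)..T, φ t * Q (w (t, x)) with hG
  set S : Set ℝ := {x | x ∈ Ioo (0:ℝ) 1 ∧ Tendsto (fun n => I n x) atTop (𝓝 (p * G x))} with hS
  have hae := H.ae_tendsto_trace hT hp hFQ hφ.continuous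
  have hSm : ∀ {l : Filter ℝ}, Ioo (0:ℝ) 1 ∈ l → ∀ᶠ x in l ⊓ ae volume, x ∈ S := by
    intro l hl
    filter_upwards [Filter.mem_inf_of_left hl, hae.filter_mono inf_le_right] with x hx h
    exact ⟨hx, h ⟨hx.1.le, hx.2.le⟩⟩
  have hanti : ∀ s ∈ S, ∀ x ∈ S, x ≤ s → p * G s - C * s ≤ p * G x - C * x := by
    intro s hs x hx hxs
    have := le_of_tendsto' (hs.2.sub hx.2) fun n => hC n x s hx.1.1.le hxs hs.1.2.le
    linarith
  constructor
  · intro h0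
    have hlim : ∃ L ≤ (0:ℝ), Tendsto (fun x => p * G x - C * x) (𝓝[>] 0 ⊓ ae volume) (𝓝 L) := by
      refine exists_tendsto_of_eventually_mono (hSm (Ioo_mem_nhdsGT zero_lt_one))
        (fun s hs => ?_) (fun s hs => ?_)
      · filter_upwards [hSm (Ioo_mem_nhdsGT zero_lt_one),
          Filter.mem_inf_of_left (Ioo_mem_nhdsGT hs.1.1)] with x hx hxs
        exact hanti s hs x hx hxs.2.le
      · have hn : ∀ n, I n s ≤ C * s := fun n => by
          have h1 := hC n 0 s le_rfl hs.1.1.le hs.1.2.le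
          have h2 : 0 ≤ ∫ t in (0:ℝ)..T, -(φ t * entropyFlux (e n) p F Q (v n) (t, 0)) :=
            intervalIntegral.integral_nonneg hT.le fun t ht =>
              neg_nonneg.2 (mul_nonpos_of_nonneg_of_nonpos (hφ0 t ht) (h0 n t ht))
          rw [intervalIntegral.integral_neg] at h2
          simp only [hI]
          linarith
        linarith [le_of_tendsto' hs.2 hn]
    obtain ⟨L, hL, ht⟩ := hlim
    refine ⟨p⁻¹ * (L + C * 0), by
      rw [mul_zero, add_zero]
      exact mul_nonpos_of_nonneg_of_nonpos (inv_nonneg.2 hp.le) hL, ?_⟩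
    have hx : Tendsto (fun x : ℝ => x) (𝓝[>] 0 ⊓ ae volume) (𝓝 0) :=
      tendsto_id.mono_left (inf_le_left.trans nhdsWithin_le_nhds)
    refine ((ht.add (hx.const_mul C)).const_mul p⁻¹).congr fun x => ?_
    field_simp
    ring
  · intro h0
    have hlim : ∃ L ≤ C, Tendsto (fun x => -(p * G x - C * x)) (𝓝[<] 1 ⊓ ae volume) (𝓝 L) := by
      refine exists_tendsto_of_eventually_mono (hSm (Ioo_mem_nhdsLT zero_lt_one))
        (fun s hs => ?_) (fun s hs => ?_)
      · filter_upwards [hSm (Ioo_mem_nhdsLT zero_lt_one),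
          Filter.mem_inf_of_left (Ioo_mem_nhdsLT hs.1.2)] with x hx hxs
        exact neg_le_neg (hanti x hx s hs hxs.1.le)
      · have hn : ∀ n, -(C * (1 - s)) ≤ I n s := fun n => by
          have h1 := hC n s 1 hs.1.1.le hs.1.2.le le_rfl
          have h2 : 0 ≤ ∫ t in (0:ℝ)..T, φ t * entropyFlux (e n) p F Q (v n) (t, 1) :=
            intervalIntegral.integral_nonneg hT.le fun t ht =>
              mul_nonneg (hφ0 t ht) (h0 n t ht)
          simp only [hI]
          linarith
        linarith [ge_of_tendsto' hs.2 hn]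
    obtain ⟨L, hL, ht⟩ := hlim
    refine ⟨p⁻¹ * (L - C * 1), mul_nonpos_of_nonneg_of_nonpos (inv_nonneg.2 hp.le)
      (by linarith), ?_⟩
    have hx : Tendsto (fun x : ℝ => x) (𝓝[<] 1 ⊓ ae volume) (𝓝 1) :=
      tendsto_id.mono_left (inf_le_left.trans nhdsWithin_le_nhds)
    refine ((ht.sub (hx.const_mul C)).const_mul p⁻¹).congr fun x => ?_
    field_simp
    ring

lemma intervalIntegrable_trace (H : IsViscousLimit T p α β γ δ M v0 e v w) (hT : 0 < T)
    {Q φ : ℝ → ℝ} (hQ : Continuous Q) (hφ : ContinuousOn φ (Icc 0 T)) (x : ℝ) :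
    IntervalIntegrable (fun t => φ t * Q (w (t, x))) volume 0 T := by
  obtain ⟨B, -, hB⟩ := exists_abs_le_on_unit hQ
  have : IntervalIntegrable (fun t => Q (w (t, x))) volume 0 T := by
    rw [intervalIntegrable_iff_integrableOn_Ioc_of_le hT.le]
    exact Measure.integrableOn_of_bounded (M := B) (by simp)
      (hQ.measurable.comp (H.measurable.comp measurable_prodMk_right)).aestronglyMeasurable
      (Eventually.of_forall fun t => hB _ (H.mem _))
  exact this.continuousOn_mul (by rwa [uIcc_of_le hT.le])

/-- Perturbing the weight of a trace by at most `κ` changes it by at most `κ B T`. -/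
lemma abs_trace_sub_le (H : IsViscousLimit T p α β γ δ M v0 e v w) (hT : 0 < T)
    {Q φ φ' : ℝ → ℝ} (hQ : Continuous Q) (hφ : ContinuousOn φ (Icc 0 T))
    (hφ' : ContinuousOn φ' (Icc 0 T)) {B κ : ℝ} (hB : ∀ a ∈ Icc (0:ℝ) 1, |Q a| ≤ B)
    (hκ : ∀ t ∈ Icc 0 T, |φ t - φ' t| ≤ κ) (x : ℝ) :
    |(∫ t in (0:ℝ)..T, φ t * Q (w (t, x))) - ∫ t in (0:ℝ)..T, φ' t * Q (w (t, x))|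
      ≤ κ * B * T := by
  rw [← intervalIntegral.integral_sub (H.intervalIntegrable_trace hT hQ hφ x)
    (H.intervalIntegrable_trace hT hQ hφ' x)]
  refine (abs_interval_integral_le (C := κ * B) hT.le fun t ht => ?_).trans_eq (by rw [sub_zero])
  rw [← sub_mul, abs_mul]
  exact mul_le_mul (hκ t ht) (hB _ (H.mem _)) (abs_nonneg _) ((abs_nonneg _).trans (hκ t ht))

lemma exists_traces (H : IsViscousLimit T p α β γ δ M v0 e v w) (hT : 0 < T)
    (hp : 0 < p) {F Q : ℝ → ℝ} (hFQ : IsLaxPair F Q) {φ : ℝ → ℝ} (hφ : ContinuousOn φ (Icc 0 T))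
    (hφ0 : ∀ t ∈ Icc 0 T, 0 ≤ φ t) :
    ((∀ n, ∀ t ∈ Icc 0 T, entropyFlux (e n) p F Q (v n) (t, 0) ≤ 0) →
      ∃ L ≤ (0:ℝ), Tendsto (fun x => ∫ t in (0:ℝ)..T, φ t * Q (w (t, x)))
        (𝓝[>] 0 ⊓ ae volume) (𝓝 L)) ∧
    ((∀ n, ∀ t ∈ Icc 0 T, 0 ≤ entropyFlux (e n) p F Q (v n) (t, 1)) →
      ∃ L ≤ (0:ℝ), Tendsto (fun x => -∫ t in (0:ℝ)..T, φ t * Q (w (t, x)))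
        (𝓝[<] 1 ⊓ ae volume) (𝓝 L)) := by
  obtain ⟨B, hB0, hB⟩ := exists_abs_le_on_unit hFQ.2.1.continuous
  have happrox : ∀ κ > 0, ∃ φ' : ℝ → ℝ, ContDiff ℝ 1 φ' ∧ (∀ t ∈ Icc 0 T, 0 ≤ φ' t) ∧
      ∀ x, |(∫ t in (0:ℝ)..T, φ t * Q (w (t, x))) - ∫ t in (0:ℝ)..T, φ' t * Q (w (t, x))|
        ≤ κ := by
    intro κ hκ
    set η := κ / (2 * (B * T + 1)) with hη
    have hη0 : 0 < η := by positivity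
    obtain ⟨P, hP⟩ := exists_polynomial_near_of_continuousOn 0 T φ hφ η hη0
    have hφ' : ContDiff ℝ 1 fun t => P.eval t + η := by
      have := (Polynomial.contDiff_aeval P 1 : ContDiff ℝ 1 fun x : ℝ => Polynomial.aeval x P)
      simp only [Polynomial.coe_aeval_eq_eval] at this
      exact this.add contDiff_const
    refine ⟨fun t => P.eval t + η, hφ', fun t ht => ?_, fun x => ?_⟩
    · have := (abs_lt.1 (hP t ht)).1
      linarith [hφ0 t ht]
    · refine (H.abs_trace_sub_le hT hFQ.2.1.continuous hφ hφ'.continuous.continuousOn hB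
        (κ := 2 * η) (fun t ht => ?_) x).trans ?_
      · have := abs_lt.1 (hP t ht)
        exact abs_le.2 ⟨by linarith, by linarith⟩
      · have : 2 * η * (B * T + 1) = κ := by rw [hη]; field_simp
        nlinarith
  constructor
  · intro h0
    refine exists_tendsto_of_approx fun κ hκ => ?_
    obtain ⟨φ', h1, h2, h3⟩ := happrox κ hκ
    exact ⟨_, h3, (H.exists_traces_of_contDiff hT hp hFQ h1 h2).1 h0⟩
  · intro h0
    refine exists_tendsto_of_approx fun κ hκ => ?_
    obtain ⟨φ', h1, h2, h3⟩ := happrox κ hκ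
    refine ⟨_, fun x => ?_, (H.exists_traces_of_contDiff hT hp hFQ h1 h2).2 h0⟩
    rw [neg_sub_neg, abs_sub_comm]
    exact h3 x

end IsViscousLimit

/-! ### The limit of the viscous solutions -/

lemma isRobinSol_of_deriv {T p α β γ δ ε : ℝ} (hT : 0 < T) {v0 : ℝ → ℝ} {v : ℝ × ℝ → ℝ}
    (hsm : ContDiff ℝ (⊤ : ℕ∞) v) (hmem : ∀ z ∈ rect T, v z ∈ Icc (0:ℝ) 1)
    (hpde : ∀ t ∈ Ioo 0 T, ∀ x ∈ Ioo (0:ℝ) 1, deriv (fun s => v (s, x)) t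
      = ε * deriv (deriv (fun y => v (t, y))) x - p * deriv (fun y => J (v (t, y))) x)
    (hinit : ∀ x ∈ Icc (0:ℝ) 1, v (0, x) = v0 x)
    (hbc0 : ∀ t ∈ Icc (0:ℝ) T, ε * deriv (fun y => v (t, y)) 0 - p * J (v (t, 0))
        + α - (α + γ) * v (t, 0) = 0)
    (hbc1 : ∀ t ∈ Icc (0:ℝ) T, ε * deriv (fun y => v (t, y)) 1 - p * J (v (t, 1))
        - δ + (β + δ) * v (t, 1) = 0) :
    IsRobinSol T p α β γ δ ε v0 v := by
  have hd : Differentiable ℝ v := hsm.differentiable (by simp)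
  have hdx : Differentiable ℝ (Dx v) := (contDiff_Dx hsm).differentiable (by simp)
  have hX : ∀ t x, HasDerivAt (fun y => v (t, y)) (Dx v (t, x)) x := fun t x =>
    hasDerivAt_Dx (hd _)
  have hX' : ∀ t, deriv (fun y => v (t, y)) = fun x => Dx v (t, x) := fun t =>
    funext fun x => (hX t x).deriv
  refine ⟨hsm, hmem, ?_, hinit, fun t ht => ?_, fun t ht => ?_⟩
  · have hc := hsm.continuous
    have hcx := (contDiff_Dx hsm).continuous
    have hcxx := (contDiff_Dx (contDiff_Dx hsm)).continuous
    refine eqOn_rect_of_eqOn_interior hT (contDiff_Dt hsm).continuous (by fun_prop) ?_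
    rintro ⟨t, x⟩ ⟨ht, hx⟩
    have h := hpde t ht x hx
    have hJ : HasDerivAt (fun y => J (v (t, y))) ((1 - 2 * v (t, x)) * Dx v (t, x)) x :=
      (hasDerivAt_J _).comp x (hX t x)
    rwa [(hasDerivAt_Dt (hd (t, x))).deriv, hX', (hasDerivAt_Dx (hdx (t, x))).deriv,
      hJ.deriv] at h
  · have := hbc0 t ht
    rw [hX'] at this
    linarith
  · have := hbc1 t ht
    rw [hX'] at this
    linarith

lemma IsViscousFamily.exists_isViscousLimit {T p α β γ δ M : ℝ} {K : ℝ≥0} {v0 : ℝ → ℝ}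
    {u V : ℝ → ℝ × ℝ → ℝ} {U : ℝ × ℝ → ℝ} (H : IsViscousFamily T p α β γ δ M K v0 u V U)
    (hT : 0 < T) (hp : 0 < p) (hv0 : ContDiff ℝ (⊤ : ℕ∞) v0)
    (hv0b : ∀ x ∈ Icc (0:ℝ) 1, v0 x ∈ Icc (0:ℝ) 1) :
    ∃ (e : ℕ → ℝ) (v : ℕ → ℝ × ℝ → ℝ),
      IsViscousLimit T p α β γ δ M v0 e v (limitDensity U) := by
  obtain ⟨e, he, hae⟩ := H.exists_seq_tendsto_ae hT hp hv0 hv0b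
  exact ⟨e, fun n => u (e n), fun n => (he n).1, fun n => H.sol _ (he n).1,
    fun n => H.abs_flux_le _ (he n).1 (he n).2, measurable_limitDensity U, limitDensity_mem U, hae⟩

lemma restrict_Ioo_prod_Ioo (T : ℝ) :
    (volume : Measure (ℝ × ℝ)).restrict (Ioo 0 T ×ˢ Ioo (0:ℝ) 1) = volume.restrict (rect T) := by
  rw [rect, Measure.volume_eq_prod, ← Measure.prod_restrict, ← Measure.prod_restrict,
    restrict_Ioo_eq_restrict_Icc, restrict_Ioo_eq_restrict_Icc]

/-- Theorem 2.8, Robin boundary case: vanishing viscosity limit of the viscous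
conservation law with Robin boundary conditions converges (weak-⋆ in `L^∞`) to the
entropy solution with boundary data `v₋`, `v₊` given by the stationary densities. -/
theorem stmt4 (T p α β γ δ : ℝ) (hT : 0 < T) (hp : 0 < p)
    (hα : 0 ≤ α) (hβ : 0 ≤ β) (hγ : 0 ≤ γ) (hδ : 0 ≤ δ)
    (v0 : ℝ → ℝ) (hv0sm : ContDiff ℝ (⊤ : ℕ∞) v0)
    (hv0b : ∀ x ∈ Set.Icc (0:ℝ) 1, v0 x ∈ Set.Icc (0:ℝ) 1)
    (vm vp : ℝ)
    (hvm : vm = (p + α + γ - Real.sqrt ((p - α + γ)^2 + 4*α*γ)) / (2*p))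
    (hvp : vp = (p - β - δ + Real.sqrt ((p - β + δ)^2 + 4*β*δ)) / (2*p))
    (u : ℝ → ℝ × ℝ → ℝ)
    (hsm : ∀ ε > (0:ℝ), ContDiff ℝ (⊤ : ℕ∞) (u ε))
    (hub : ∀ ε > (0:ℝ), ∀ z ∈ Set.Icc (0:ℝ) T ×ˢ Set.Icc (0:ℝ) 1, u ε z ∈ Set.Icc (0:ℝ) 1)
    (hpde : ∀ ε > (0:ℝ), ∀ t ∈ Set.Ioo 0 T, ∀ x ∈ Set.Ioo (0:ℝ) 1,
      deriv (fun s => u ε (s, x)) t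
        = ε * deriv (deriv (fun y => u ε (t, y))) x
          - p * deriv (fun y => J (u ε (t, y))) x)
    (hinit : ∀ ε > (0:ℝ), ∀ x ∈ Set.Icc (0:ℝ) 1, u ε (0, x) = v0 x)
    (hbc0 : ∀ ε > (0:ℝ), ∀ t ∈ Set.Icc (0:ℝ) T,
      ε * deriv (fun y => u ε (t, y)) 0 - p * J (u ε (t, 0))
        + α - (α + γ) * u ε (t, 0) = 0)
    (hbc1 : ∀ ε > (0:ℝ), ∀ t ∈ Set.Icc (0:ℝ) T,
      ε * deriv (fun y => u ε (t, y)) 1 - p * J (u ε (t, 1))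
        - δ + (β + δ) * u ε (t, 1) = 0) :
    ∃ w : ℝ × ℝ → ℝ, Measurable w ∧
      (∀ᵐ z ∂(volume.restrict (Set.Icc (0:ℝ) T ×ˢ Set.Icc (0:ℝ) 1)), w z ∈ Set.Icc (0:ℝ) 1) ∧
      -- weak-⋆ convergence in L^∞([0,T]×[0,1]) as ε → 0⁺
      (∀ g : ℝ × ℝ → ℝ, IntegrableOn g (Set.Icc (0:ℝ) T ×ˢ Set.Icc (0:ℝ) 1) →
        Tendsto (fun ε => ∫ z in Set.Icc (0:ℝ) T ×ˢ Set.Icc (0:ℝ) 1, u ε z * g z)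
          (nhdsWithin 0 (Set.Ioi 0))
          (nhds (∫ z in Set.Icc (0:ℝ) T ×ˢ Set.Icc (0:ℝ) 1, w z * g z))) ∧
      -- (i) the entropy inequality
      (∀ F Q : ℝ → ℝ, IsLaxPair F Q → ∀ ψ : ℝ × ℝ → ℝ,
        ContDiff ℝ (⊤ : ℕ∞) ψ → HasCompactSupport ψ →
        tsupport ψ ⊆ Set.Ioo 0 T ×ˢ Set.Ioo (0:ℝ) 1 → (∀ z, 0 ≤ ψ z) →
        0 ≤ ∫ z in Set.Ioo (0:ℝ) T ×ˢ Set.Ioo (0:ℝ) 1,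
              (F (w z) * fderiv ℝ ψ z (1, 0) + p * Q (w z) * fderiv ℝ ψ z (0, 1))) ∧
      -- (ii) the initial condition, as an essential limit t → 0+
      Tendsto (fun t => ∫ x in (0:ℝ)..1, |w (t, x) - v0 x|)
        (nhdsWithin 0 (Set.Ioi 0) ⊓ ae volume) (nhds 0) ∧
      -- (iii) the Otto boundary conditions, as essential limits x → 0+ and x → 1−
      (∀ F Q : ℝ → ℝ → ℝ, IsBoundaryPair F Q →
        ∀ φ : ℝ → ℝ, ContinuousOn φ (Set.Icc 0 T) → (∀ t ∈ Set.Icc (0:ℝ) T, 0 ≤ φ t) →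
        (∃ Lm ≤ (0:ℝ), Tendsto (fun x => ∫ t in (0:ℝ)..T, φ t * Q (w (t, x)) vm)
            (nhdsWithin 0 (Set.Ioi 0) ⊓ ae volume) (nhds Lm)) ∧
        (∃ Lp, 0 ≤ Lp ∧ Tendsto (fun x => ∫ t in (0:ℝ)..T, φ t * Q (w (t, x)) vp)
            (nhdsWithin 1 (Set.Iio 1) ⊓ ae volume) (nhds Lp))) := by
  have B : IsBoundaryDensity p α β γ δ vm vp := isBoundaryDensity hp hα hβ hγ hδ hvm hvp
  have S : ∀ ε > 0, IsRobinSol T p α β γ δ ε v0 (u ε) := fun ε hε =>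
    isRobinSol_of_deriv hT (hsm ε hε) (hub ε hε) (hpde ε hε) (hinit ε hε) (hbc0 ε hε) (hbc1 ε hε)
  obtain ⟨M, K, V, U, H⟩ := exists_isViscousFamily hT hp hα hβ hγ hδ B hv0sm S
  obtain ⟨e, v, L⟩ := H.exists_isViscousLimit hT hp hv0sm hv0b
  refine ⟨limitDensity U, measurable_limitDensity U, Eventually.of_forall (limitDensity_mem U),
    fun g hg => H.tendsto_weakStar hT hg, fun F Q hFQ ψ hψ _ hsupp hψ0 => ?_,
    L.tendsto_initial hT hp hv0sm hv0b, fun F Q hFQ φ hφ hφ0 => ⟨?_, ?_⟩⟩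
  · rw [restrict_Ioo_prod_Ioo]
    refine (L.entropy_nonneg hT hp hFQ (hψ.of_le (by simp)) hsupp hψ0).trans_eq ?_
    congr 1
    ext z
    simp only [Dt, Dx]
    ring
  · obtain ⟨hl, -, hF, hQ⟩ := hFQ vm B.vm_mem
    exact (L.exists_traces hT hp hl hφ hφ0).1 fun n t ht =>
      (L.sol n).entropyFlux_left_nonpos hα hγ B hl hF hQ ht
  · obtain ⟨hl, -, hF, hQ⟩ := hFQ vp B.vp_mem
    obtain ⟨l, hl0, hlim⟩ := (L.exists_traces hT hp hl hφ hφ0).2 fun n t ht =>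
      (L.sol n).entropyFlux_right_nonneg hβ hδ B hl hF hQ ht
    exact ⟨-l, neg_nonneg.2 hl0, by simpa using hlim.neg⟩
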